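/- Let m and d be integers with m ≥ 2 and d ≥ 2, and let G = {1,…,m}^d be the d-dimensional grid equipped with the ℓ1 metric (the shortest-path metric of the grid graph). There exists a universal constant c > 0 (independent of m and d) such that: for every C ≥ 1 and every map F : EMD(G) → L_1 with bi-Lipschitz distortion at most C, one has C ≥ c·d·log m. -/

import Mathlib

open MeasureTheory Finset

noncomputable section

/-- Points of the grid `{1,…,m}^d` (coordinates taken 0-based). -/
abbrev GPt (m d : ℕ) := Fin d → Fin m

/-- The ℓ1 metric on the grid `{1,…,m}^d` (the shortest-path metric of the grid graph). -/
def gdistM {m d : ℕ} (u v : GPt m d) : ℝ := ∑ i, |((u i : ℕ) : ℝ) - ((v i : ℕ) : ℝ)|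

/-- The transportation cost norm on signed measures of total mass `0` on the grid,
via Kantorovich duality. The earth mover distance between probability measures `μ, ν`
is `emd(μ,ν) = ‖μ - ν‖_TC`. -/
def tcNormG (m d : ℕ) (μ : GPt m d → ℝ) : ℝ :=
  sSup {r : ℝ | ∃ f : GPt m d → ℝ,
    (∀ u v, |f u - f v| ≤ gdistM u v) ∧ r = |∑ x, f x * μ x|}

/-- Probability measures on the grid: the points of `EMD({1,…,m}^d)`. -/
abbrev ProbMeas (m d : ℕ) := {μ : GPt m d → ℝ // (∀ x, 0 ≤ μ x) ∧ ∑ x, μ x = 1}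

/-- The Lebesgue space `L_1(0,1)`. -/
abbrev L1Space : Type := Lp ℝ 1 (volume.restrict (Set.Ioo (0:ℝ) 1))


/-- Finite-rank contractions that almost preserve norms on a compact subset of `L_1`. -/
lemma exists_finite_rank (K : Set L1Space) (hK : IsCompact K) (ε : ℝ) (hε : 0 < ε) :
    ∃ (ι : Type) (_ : Fintype ι) (P : ι → L1Space → ℝ),
      (∀ l f g, P l (f - g) = P l f - P l g) ∧
      (∀ f, ∑ l, |P l f| ≤ ‖f‖) ∧ ∀ f ∈ K, ‖f‖ - ε ≤ ∑ l, |P l f| := by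
  classical
  set μ := volume.restrict (Set.Ioo (0:ℝ) 1) with hμ
  obtain ⟨t, htK, htfin, hcov⟩ := hK.finite_cover_balls (e := ε / 4) (by positivity)
  have hdense : DenseRange ((↑) : Lp.simpleFunc ℝ 1 μ → L1Space) :=
    Lp.simpleFunc.denseRange (by norm_num)
  have hs : ∀ c : L1Space, ∃ s : Lp.simpleFunc ℝ 1 μ,
      dist c (s : L1Space) < ε / 4 := fun c => hdense.exists_dist_lt c (by positivity)
  choose s hs using hs
  have : Fintype t := htfin.fintype
  let h : ℝ → (t → ℝ) := fun x c => Lp.simpleFunc.toSimpleFunc (s c.1) x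
  have hmeas : Measurable h := measurable_pi_lambda _ fun c => SimpleFunc.measurable _
  have hfin : (Set.range h).Finite := by
    apply Set.Finite.subset (Set.Finite.pi' (fun c : t => (Lp.simpleFunc.toSimpleFunc (s c.1)).finite_range))
    rintro _ ⟨x, rfl⟩ c
    exact ⟨x, rfl⟩
  have : Fintype (Set.range h) := hfin.fintype
  let A : Set.range h → Set ℝ := fun l => h ⁻¹' {l.1}
  have hA : ∀ l, MeasurableSet (A l) := fun l => hmeas (measurableSet_singleton _)
  have hdisj : Pairwise (Function.onFun Disjoint A) := by
    intro l l' hll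
    refine Set.disjoint_left.2 fun x hx hx' => hll ?_
    apply Subtype.ext
    exact (show h x = l.1 from hx).symm.trans hx'
  have hunion : (⋃ l, A l) = Set.univ := by
    ext x; simp only [Set.mem_iUnion, Set.mem_univ, iff_true]
    exact ⟨⟨h x, x, rfl⟩, rfl⟩
  have hintegr : ∀ f : L1Space, Integrable f μ := fun f => L1.integrable_coeFn f
  have hnorm : ∀ f : L1Space, ‖f‖ = ∑ l, ∫ x in A l, ‖f x‖ ∂μ := by
    intro f
    rw [L1.norm_eq_integral_norm, ← integral_iUnion_fintype hA hdisj, hunion, Measure.restrict_univ]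
    intro l
    exact (hintegr f).norm.integrableOn
  let P : Set.range h → L1Space → ℝ := fun l f => ∫ x in A l, f x ∂μ
  have hP1 : ∀ l f g, P l (f - g) = P l f - P l g := by
    intro l f g
    simp only [P]
    rw [← integral_sub (hintegr f).integrableOn (hintegr g).integrableOn]
    apply integral_congr_ae
    exact ae_restrict_of_ae (Lp.coeFn_sub f g)
  have hP2 : ∀ f, ∑ l, |P l f| ≤ ‖f‖ := by
    intro f
    rw [hnorm f]
    refine Finset.sum_le_sum fun l _ => ?_
    rw [← Real.norm_eq_abs]
    exact norm_integral_le_integral_norm _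
  have hP3 : ∀ c : t, ∑ l, |P l (s c.1 : L1Space)| = ‖(s c.1 : L1Space)‖ := by
    intro c
    rw [hnorm]
    refine Finset.sum_congr rfl fun l _ => ?_
    have hae : ∀ᵐ x ∂(μ.restrict (A l)), (s c.1 : L1Space) x = l.1 c := by
      have h1 := ae_restrict_of_ae (s := A l) (Lp.simpleFunc.toSimpleFunc_eq_toFun (s c.1))
      filter_upwards [h1, ae_restrict_mem (hA l)] with x hx hxA
      rw [← hx]
      exact congrFun (show h x = l.1 from hxA) c
    have e1 : P l (s c.1 : L1Space) = ∫ x in A l, l.1 c ∂μ := integral_congr_ae hae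
    have e2 : ∫ x in A l, ‖(s c.1 : L1Space) x‖ ∂μ = ∫ x in A l, ‖l.1 c‖ ∂μ :=
      integral_congr_ae (hae.mono fun x hx => by simp only [hx])
    rw [e1, e2, integral_const, integral_const, smul_eq_mul, smul_eq_mul, abs_mul, Real.norm_eq_abs,
      abs_of_nonneg measureReal_nonneg]
  refine ⟨Set.range h, inferInstance, P, hP1, hP2, ?_⟩
  intro f hf
  obtain ⟨c, hc, hfc⟩ : ∃ c ∈ t, f ∈ Metric.ball c (ε / 4) := by simpa using hcov hf
  have d1 : ‖f - s c‖ ≤ ε / 2 := by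
    rw [← dist_eq_norm]
    have := dist_triangle f c (s c)
    have := hs c
    have := Metric.mem_ball.1 hfc
    linarith
  have d2 : ‖f‖ - ‖(s c : L1Space)‖ ≤ ‖f - s c‖ := norm_sub_norm_le _ _
  have d3 := hP3 ⟨c, hc⟩
  have d4 : ∑ l, |P l (s c : L1Space)| ≤ ∑ l, |P l f| + ∑ l, |P l (f - s c)| := by
    rw [← Finset.sum_add_distrib]
    refine Finset.sum_le_sum fun l _ => ?_
    rw [hP1]
    have := abs_sub_abs_le_abs_sub (P l (s c : L1Space)) (P l f)
    rw [abs_sub_comm] at this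
    linarith
  have d5 := hP2 (f - s c)
  simp only at d3
  linarith

/-- Push-forward of a signed measure along a map into the grid. -/
def pushM {X : Type*} [Fintype X] {m d : ℕ} (ι : X → GPt m d) (v : X → ℝ) : GPt m d → ℝ :=
  fun g => ∑ x, if ι x = g then v x else 0

lemma sum_pushM {X : Type*} [Fintype X] {m d : ℕ} (ι : X → GPt m d) (v : X → ℝ)
    (f : GPt m d → ℝ) : ∑ g, f g * pushM ι v g = ∑ x, f (ι x) * v x := by
  simp only [pushM, Finset.mul_sum]
  rw [Finset.sum_comm]
  refine Finset.sum_congr rfl fun x _ => ?_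
  simp

lemma gdistM_le {m d : ℕ} (u v : GPt m d) : gdistM u v ≤ d * m := by
  unfold gdistM
  calc ∑ i, |((u i : ℕ) : ℝ) - ((v i : ℕ) : ℝ)| ≤ ∑ i : Fin d, (m : ℝ) := by
        refine Finset.sum_le_sum fun i _ => ?_
        have h1 : ((u i : ℕ) : ℝ) ≤ m := by exact_mod_cast (u i).2.le
        have h2 : ((v i : ℕ) : ℝ) ≤ m := by exact_mod_cast (v i).2.le
        rw [abs_le]; constructor <;> linarith [Nat.cast_nonneg (α := ℝ) (u i : ℕ), Nat.cast_nonneg (α := ℝ) (v i : ℕ)]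
    _ = d * m := by simp

lemma lip_sum_le {X : Type*} [Fintype X] {m d : ℕ} (ι : X → GPt m d) (v : X → ℝ)
    (hv : ∑ x, v x = 0) (f : GPt m d → ℝ) (hf : ∀ u v, |f u - f v| ≤ gdistM u v) :
    |∑ x, f (ι x) * v x| ≤ d * m * ∑ x, |v x| := by
  rcases isEmpty_or_nonempty X with hX | ⟨⟨x0⟩⟩
  · simp
  · have e : ∑ x, f (ι x) * v x = ∑ x, (f (ι x) - f (ι x0)) * v x := by
      simp only [sub_mul, Finset.sum_sub_distrib, ← Finset.mul_sum, hv, mul_zero, sub_zero]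
    rw [e, Finset.mul_sum]
    refine (Finset.abs_sum_le_sum_abs _ _).trans (Finset.sum_le_sum fun x _ => ?_)
    rw [abs_mul]
    exact mul_le_mul_of_nonneg_right ((hf _ _).trans (gdistM_le _ _)) (abs_nonneg _)

lemma le_tc {X : Type*} [Fintype X] {m d : ℕ} (ι : X → GPt m d) (v : X → ℝ)
    (hv : ∑ x, v x = 0) (f : GPt m d → ℝ) (hf : ∀ u v, |f u - f v| ≤ gdistM u v) :
    |∑ x, f (ι x) * v x| ≤ tcNormG m d (pushM ι v) := by
  apply le_csSup
  · refine ⟨d * m * ∑ x, |v x|, ?_⟩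
    rintro r ⟨f, hf, rfl⟩
    rw [sum_pushM]
    exact lip_sum_le ι v hv f hf
  · exact ⟨f, hf, by rw [sum_pushM]⟩

lemma tc_le {X : Type*} [Fintype X] {m d : ℕ} (ι : X → GPt m d) (v : X → ℝ) (B : ℝ) (hB : 0 ≤ B)
    (h : ∀ f : GPt m d → ℝ, (∀ u v, |f u - f v| ≤ gdistM u v) → |∑ x, f (ι x) * v x| ≤ B) :
    tcNormG m d (pushM ι v) ≤ B := by
  apply Real.sSup_le _ hB
  rintro r ⟨f, hf, rfl⟩
  rw [sum_pushM]
  exact h f hf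

lemma tc_nonneg (m d : ℕ) (v : GPt m d → ℝ) : 0 ≤ tcNormG m d v := by
  apply Real.sSup_nonneg
  rintro r ⟨f, hf, rfl⟩
  exact abs_nonneg _

lemma tc_smul {X : Type*} [Fintype X] {m d : ℕ} (ι : X → GPt m d) (v : X → ℝ)
    (hv : ∑ x, v x = 0) (c : ℝ) (hc : 0 < c) :
    tcNormG m d (pushM ι (c • v)) = c * tcNormG m d (pushM ι v) := by
  have hcv : ∑ x, (c • v) x = 0 := by simp [← Finset.mul_sum, hv]
  have e : ∀ f : GPt m d → ℝ, |∑ x, f (ι x) * (c • v) x| = c * |∑ x, f (ι x) * v x| := by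
    intro f
    rw [← abs_of_pos hc, ← abs_mul, Finset.mul_sum, abs_of_pos hc]
    congr 1
    refine Finset.sum_congr rfl fun x _ => ?_
    simp only [Pi.smul_apply, smul_eq_mul]; ring
  apply le_antisymm
  · apply tc_le _ _ _ (mul_nonneg hc.le (tc_nonneg _ _ _))
    intro f hf
    rw [e]
    exact mul_le_mul_of_nonneg_left (le_tc ι v hv f hf) hc.le
  · rw [← le_div_iff₀' hc]
    apply tc_le _ _ _ (div_nonneg (tc_nonneg _ _ _) hc.le)
    intro f hf
    rw [le_div_iff₀' hc, ← e]
    exact le_tc ι _ hcv f hf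

/-- The basic dipole `δ_x - δ_y`. -/
def dip {X : Type*} [DecidableEq X] (x y : X) : X → ℝ := Pi.single x 1 - Pi.single y 1

lemma sum_mul_dip {X : Type*} [Fintype X] [DecidableEq X] (x y : X) (f : X → ℝ) :
    ∑ z, f z * dip x y z = f x - f y := by
  simp [dip, mul_sub, Finset.sum_sub_distrib, Pi.single_apply]

lemma sum_dip {X : Type*} [Fintype X] [DecidableEq X] (x y : X) : ∑ z, dip x y z = 0 := by
  have := sum_mul_dip x y (fun _ => (1:ℝ)); simpa using this

lemma tc_dip {X : Type*} [Fintype X] [DecidableEq X] {m d : ℕ} (ι : X → GPt m d) (x y : X) :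
    tcNormG m d (pushM ι (dip x y)) ≤ gdistM (ι x) (ι y) := by
  apply tc_le _ _ _ (Finset.sum_nonneg fun i _ => abs_nonneg _)
  intro f hf
  rw [sum_mul_dip x y (fun z => f (ι z))]
  exact hf _ _

/-- Clamping to `[-1,1]`. -/
def clampR (a : ℝ) : ℝ := max (-1) (min 1 a)

lemma clampR_abs (a : ℝ) : |clampR a| ≤ 1 := by
  unfold clampR; rw [abs_le]
  exact ⟨le_max_left _ _, max_le (by norm_num) (min_le_left _ _)⟩

lemma clampR_eq {a : ℝ} (h : |a| ≤ 1) : clampR a = a := by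
  rw [abs_le] at h; unfold clampR
  rw [min_eq_right h.2, max_eq_right h.1]

lemma clampR_lip (a b : ℝ) : |clampR a - clampR b| ≤ |a - b| := by
  unfold clampR
  refine (abs_max_sub_max_le_max _ _ _ _).trans ?_
  simp only [sub_self, abs_zero]
  refine max_le (abs_nonneg _) ?_
  refine (abs_min_sub_min_le_max _ _ _ _).trans ?_
  simp

/-- The density around the uniform measure, for a perturbation `x`. -/
def pdens {X : Type*} [Fintype X] (x : X → ℝ) : X → ℝ := fun a =>
  (1 / Fintype.card X) * (1 + (clampR (x a) - (∑ b, clampR (x b)) / Fintype.card X) / 2)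

lemma pdens_nonneg {X : Type*} [Fintype X] [Nonempty X] (x : X → ℝ) (a : X) : 0 ≤ pdens x a := by
  unfold pdens
  have hN : (0:ℝ) < Fintype.card X := by exact_mod_cast Fintype.card_pos
  have h1 : (∑ b, clampR (x b)) / Fintype.card X ≤ 1 := by
    rw [div_le_one hN]
    calc ∑ b, clampR (x b) ≤ ∑ b : X, (1:ℝ) := Finset.sum_le_sum fun b _ => (abs_le.1 (clampR_abs (x b))).2
      _ = _ := by simp
  have h2 := (abs_le.1 (clampR_abs (x a))).1
  apply mul_nonneg (by positivity)
  linarith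

lemma pdens_sum {X : Type*} [Fintype X] [Nonempty X] (x : X → ℝ) : ∑ a, pdens x a = 1 := by
  unfold pdens
  have hN : (0:ℝ) < Fintype.card X := by exact_mod_cast Fintype.card_pos
  rw [← Finset.mul_sum, Finset.sum_add_distrib, ← Finset.sum_div, Finset.sum_sub_distrib]
  simp only [Finset.sum_const, Finset.card_univ, nsmul_eq_mul, mul_one]
  field_simp
  ring

/-- The corresponding point of `EMD`. -/
def pmeas {X : Type*} [Fintype X] [Nonempty X] {m d : ℕ} (ι : X → GPt m d) (x : X → ℝ) :
    ProbMeas m d :=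
  ⟨pushM ι (pdens x), by
    constructor
    · intro g
      exact Finset.sum_nonneg fun a _ => by split_ifs; exacts [pdens_nonneg x a, le_rfl]
    · have := sum_pushM ι (pdens x) (fun _ => 1)
      simpa [pdens_sum] using this⟩

lemma pushM_sub {X : Type*} [Fintype X] {m d : ℕ} (ι : X → GPt m d) (v w : X → ℝ) :
    pushM ι v - pushM ι w = pushM ι (v - w) := by
  ext g
  simp only [pushM, Pi.sub_apply, ← Finset.sum_sub_distrib]
  refine Finset.sum_congr rfl fun x _ => ?_
  split_ifs <;> simp

lemma tc_pmeas_lip {X : Type*} [Fintype X] [Nonempty X] {m d : ℕ} (ι : X → GPt m d)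
    (x y : X → ℝ) :
    tcNormG m d ((pmeas ι x).1 - (pmeas ι y).1) ≤ (d * m) * ‖x - y‖ := by
  have hN : (0:ℝ) < Fintype.card X := by exact_mod_cast Fintype.card_pos
  show tcNormG m d (pushM ι (pdens x) - pushM ι (pdens y)) ≤ _
  rw [pushM_sub]
  apply tc_le _ _ _ (by positivity)
  intro f hf
  refine (lip_sum_le ι _ (by simp [Finset.sum_sub_distrib, pdens_sum]) f hf).trans ?_
  apply mul_le_mul_of_nonneg_left _ (by positivity)
  have h1 : ∀ a, |clampR (x a) - clampR (y a)| ≤ ‖x - y‖ := fun a =>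
    (clampR_lip _ _).trans (by simpa using norm_le_pi_norm (x - y) a)
  have h2 : |(∑ b, clampR (x b)) / Fintype.card X - (∑ b, clampR (y b)) / Fintype.card X| ≤ ‖x - y‖ := by
    rw [← sub_div, ← Finset.sum_sub_distrib, abs_div, abs_of_pos hN, div_le_iff₀ hN]
    refine (Finset.abs_sum_le_sum_abs _ _).trans ((Finset.sum_le_sum fun b _ => h1 b).trans ?_)
    simp [mul_comm]
  calc ∑ a, |(pdens x - pdens y) a| ≤ ∑ a : X, (1 / Fintype.card X) * ‖x - y‖ := by
        refine Finset.sum_le_sum fun a _ => ?_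
        have e : (pdens x - pdens y) a = (1 / Fintype.card X) *
          (((clampR (x a) - clampR (y a)) - ((∑ b, clampR (x b)) / Fintype.card X - (∑ b, clampR (y b)) / Fintype.card X)) / 2) := by
          simp only [pdens, Pi.sub_apply]; ring
        rw [e, abs_mul, abs_of_pos (by positivity : (0:ℝ) < 1 / Fintype.card X)]
        apply mul_le_mul_of_nonneg_left _ (by positivity)
        rw [abs_div, abs_two]
        have := abs_sub (clampR (x a) - clampR (y a)) ((∑ b, clampR (x b)) / Fintype.card X - (∑ b, clampR (y b)) / Fintype.card X)
        have := h1 a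
        linarith
    _ = ‖x - y‖ := by simp

lemma pmeas_incr {X : Type*} [Fintype X] [Nonempty X] {m d : ℕ} (ι : X → GPt m d)
    (x v : X → ℝ) (hv : ∑ a, v a = 0) (s : ℝ) (hs : 0 < s) (hx : ‖x‖ ≤ 1) (hxs : ‖x + s • v‖ ≤ 1) :
    tcNormG m d ((pmeas ι (x + s • v)).1 - (pmeas ι x).1) =
      s / (2 * Fintype.card X) * tcNormG m d (pushM ι v) := by
  have hN : (0:ℝ) < Fintype.card X := by exact_mod_cast Fintype.card_pos
  rw [← tc_smul ι v hv _ (by positivity)]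
  show tcNormG m d (pushM ι (pdens (x + s • v)) - pushM ι (pdens x)) = _
  rw [pushM_sub]
  congr 2
  have c1 : ∀ a, clampR (x a) = x a := fun a => clampR_eq ((norm_le_pi_norm x a).trans hx)
  have c2 : ∀ a, clampR ((x + s • v) a) = (x + s • v) a :=
    fun a => clampR_eq ((norm_le_pi_norm (x + s • v) a).trans hxs)
  ext a
  simp only [pdens, Pi.sub_apply, c1, c2]
  simp only [Pi.add_apply, Pi.smul_apply, smul_eq_mul, Finset.sum_add_distrib, ← Finset.mul_sum, hv]
  field_simp
  ring

lemma integrableOn_ball_of_continuous {X : Type*} [Fintype X] {h : (X → ℝ) → ℝ}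
    (hh : Continuous h) (r : ℝ) : IntegrableOn h (Metric.ball 0 r) volume :=
  (hh.continuousOn.integrableOn_compact (isCompact_closedBall 0 r)).mono_set
    Metric.ball_subset_closedBall

lemma lip_increment_le {X : Type*} [Fintype X] (φ : (X → ℝ) → ℝ) (K : NNReal)
    (hφ : LipschitzWith K φ) (v : X → ℝ) (r t : ℝ) (ht : 0 < t) (hr : r + t * ‖v‖ ≤ 1) :
    ∫ x in Metric.ball 0 r, |φ (x + t • v) - φ x| ≤
      t * ∫ x in Metric.ball 0 1, |fderiv ℝ φ x v| := by
  have hc := hφ.continuous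
  have step : ∀ n : ℕ, ∫ x in Metric.ball 0 r, |φ (x + t • v) - φ x| ≤
      t * ∫ x in Metric.ball 0 1, |φ (x + (t / (n + 1 : ℝ)) • v) - φ x| / (t / (n + 1 : ℝ)) := by
    intro n
    set s := t / (n + 1 : ℝ) with hs
    have hn : (0:ℝ) < n + 1 := by positivity
    have hs0 : 0 < s := by positivity
    let h : (X → ℝ) → ℝ := fun y => |φ (y + s • v) - φ y|
    have hhc : Continuous h := by fun_prop
    have h1 : ∀ x, |φ (x + t • v) - φ x| ≤ ∑ j ∈ Finset.range (n + 1), h (x + (j * s) • v) := by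
      intro x
      have e : φ (x + t • v) - φ x = ∑ j ∈ Finset.range (n + 1),
          (φ (x + ((j + 1 : ℕ) * s) • v) - φ (x + ((j : ℕ) * s) • v)) := by
        rw [Finset.sum_range_sub (fun j : ℕ => φ (x + ((j : ℝ) * s) • v))]
        have : ((n + 1 : ℕ) : ℝ) * s = t := by rw [hs]; push_cast; field_simp
        simp only [this]; simp
      rw [e]
      refine (Finset.abs_sum_le_sum_abs _ _).trans (Finset.sum_le_sum fun j _ => ?_)
      simp only [h]
      have : x + ((j + 1 : ℕ) * s) • v = x + (j * s) • v + s • v := by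
        rw [add_assoc, ← add_smul]; push_cast; ring_nf
      rw [this]
    have h2 : ∀ j ∈ Finset.range (n + 1), ∫ x in Metric.ball 0 r, h (x + (j * s) • v) ≤
        ∫ x in Metric.ball 0 1, h x := by
      intro j hj
      have hj' : (j : ℝ) * s ≤ t := by
        have : (j : ℝ) ≤ n + 1 := by exact_mod_cast (Finset.mem_range.1 hj).le
        calc (j : ℝ) * s ≤ (n + 1) * s := by gcongr
          _ = t := by rw [hs]; field_simp
      rw [← integral_indicator measurableSet_ball, ← integral_indicator measurableSet_ball,
        ← integral_add_right_eq_self ((Metric.ball (0 : X → ℝ) 1).indicator h) ((j * s) • v)]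
      apply integral_mono
      · rw [integrable_indicator_iff measurableSet_ball]
        exact integrableOn_ball_of_continuous (by fun_prop) r
      · refine Integrable.comp_add_right (g := (j * s) • v) (f := (Metric.ball (0 : X → ℝ) 1).indicator h) ?_
        rw [integrable_indicator_iff measurableSet_ball]
        exact integrableOn_ball_of_continuous hhc 1
      · intro x
        by_cases hx : x ∈ Metric.ball (0 : X → ℝ) r
        · have hx1 : x + (j * s) • v ∈ Metric.ball (0 : X → ℝ) 1 := by
            rw [mem_ball_zero_iff] at hx ⊢
            calc ‖x + (j * s) • v‖ ≤ ‖x‖ + ‖(j * s) • v‖ := norm_add_le _ _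
              _ = ‖x‖ + (j * s) * ‖v‖ := by
                rw [norm_smul, Real.norm_of_nonneg (by positivity)]
              _ ≤ ‖x‖ + t * ‖v‖ := by gcongr
              _ < 1 := by linarith
          simp only [Set.indicator_of_mem hx, Set.indicator_of_mem hx1]; rfl
        · simp only [Set.indicator_of_notMem hx]
          exact Set.indicator_nonneg (fun _ _ => abs_nonneg _) _
    calc ∫ x in Metric.ball 0 r, |φ (x + t • v) - φ x|
        ≤ ∫ x in Metric.ball 0 r, ∑ j ∈ Finset.range (n + 1), h (x + (j * s) • v) := by
          apply setIntegral_mono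
          · exact integrableOn_ball_of_continuous (by fun_prop) r
          · exact integrableOn_ball_of_continuous (by fun_prop) r
          · exact h1
      _ = ∑ j ∈ Finset.range (n + 1), ∫ x in Metric.ball 0 r, h (x + (j * s) • v) :=
          integral_finsetSum _ fun j _ => integrableOn_ball_of_continuous (by fun_prop) r
      _ ≤ ∑ j ∈ Finset.range (n + 1), ∫ x in Metric.ball 0 1, h x := Finset.sum_le_sum h2
      _ = (n + 1) * ∫ x in Metric.ball 0 1, h x := by simp
      _ = t * ∫ x in Metric.ball 0 1, h x / s := by
          rw [integral_div, hs]; field_simp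
  have hlim : Filter.Tendsto (fun n : ℕ => t * ∫ x in Metric.ball 0 1,
      |φ (x + (t / (n + 1 : ℝ)) • v) - φ x| / (t / (n + 1 : ℝ))) Filter.atTop
      (nhds (t * ∫ x in Metric.ball 0 1, |fderiv ℝ φ x v|)) := by
    apply Filter.Tendsto.const_mul
    apply tendsto_integral_of_dominated_convergence (fun _ => K * ‖v‖)
    · intro n
      apply Continuous.aestronglyMeasurable
      fun_prop
    · exact integrableOn_ball_of_continuous continuous_const 1
    · intro n
      refine Filter.Eventually.of_forall fun x => ?_
      have hs0 : 0 < t / (n + 1 : ℝ) := by positivity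
      rw [Real.norm_of_nonneg (by positivity), div_le_iff₀ hs0]
      have := hφ.dist_le_mul (x + (t / (n + 1 : ℝ)) • v) x
      rw [Real.dist_eq, dist_eq_norm, add_sub_cancel_left, norm_smul, Real.norm_of_nonneg hs0.le] at this
      linarith
    · have := ae_restrict_of_ae (s := Metric.ball (0 : X → ℝ) 1) (hφ.ae_differentiableAt (μ := volume))
      filter_upwards [this] with x hx
      have hl := (hx.hasFDerivAt.hasLineDerivAt v)
      have hs : Filter.Tendsto (fun n : ℕ => t / (n + 1 : ℝ)) Filter.atTop (nhdsWithin 0 {0}ᶜ) := by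
        apply tendsto_nhdsWithin_iff.2 ⟨?_, Filter.Eventually.of_forall fun n => ?_⟩
        · have := tendsto_one_div_add_atTop_nhds_zero_nat (𝕜 := ℝ)
          simpa [div_eq_mul_inv] using this.const_mul t
        · have : (0:ℝ) < t / (n + 1 : ℝ) := by positivity
          exact this.ne'
      have h3 := (hl.tendsto_slope_zero.comp hs).abs
      refine h3.congr fun n => ?_
      have hs0 : 0 < t / (n + 1 : ℝ) := by positivity
      simp only [Function.comp, smul_eq_mul]
      rw [abs_mul, abs_inv, abs_of_pos hs0]
      exact (div_eq_inv_mul _ _).symm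
  exact ge_of_tendsto' hlim step

lemma exists_radius (N : ℕ) : ∃ r : ℝ, 0 < r ∧ r < 1 ∧ 1 / 2 ≤ r ^ N := by
  refine ⟨1 - 1 / (2 * (N + 1)), ?_, ?_, ?_⟩
  · have : (1:ℝ) / (2 * (N + 1)) ≤ 1 / 2 := by
      apply one_div_le_one_div_of_le (by norm_num)
      linarith [Nat.cast_nonneg (α := ℝ) N]
    linarith
  · have : (0:ℝ) < 1 / (2 * (N + 1)) := by positivity
    linarith
  · have h := one_add_mul_le_pow (a := -(1 / (2 * ((N:ℝ) + 1)))) (by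
      have : (1:ℝ) / (2 * (N + 1)) ≤ 1 / 2 := by
        apply one_div_le_one_div_of_le (by norm_num)
        linarith [Nat.cast_nonneg (α := ℝ) N]
      linarith) N
    rw [← sub_eq_add_neg] at h
    refine le_trans ?_ h
    have : (N:ℝ) * (1 / (2 * (N + 1))) ≤ 1 / 2 := by
      rw [mul_one_div, div_le_div_iff₀ (by positivity) (by norm_num)]; linarith
    linarith

/-- Linearization: an embedding of `EMD` into `L_1` can be tested on inequalities for linear
functionals. -/
theorem linearization {m d : ℕ} (C : ℝ) (hC : 0 ≤ C) (F : ProbMeas m d → L1Space)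
    (hF : ∀ μ ν : ProbMeas m d, tcNormG m d (μ.1 - ν.1) ≤ ‖F μ - F ν‖ ∧
            ‖F μ - F ν‖ ≤ C * tcNormG m d (μ.1 - ν.1))
    {X A Eg : Type} [Fintype X] [DecidableEq X] [Nonempty X] [Fintype A] [Fintype Eg]
    (ι : X → GPt m d) (α : A → ℝ) (hα : ∀ a, 0 ≤ α a) (v : A → X → ℝ)
    (hv : ∀ a, ∑ x, v a x = 0) (β : Eg → ℝ) (hβ : ∀ e, 0 ≤ β e) (p q : Eg → X)
    (hS : ∀ f : X → ℝ, ∑ a, α a * |∑ x, f x * v a x| ≤ ∑ e, β e * |f (p e) - f (q e)|) :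
    ∑ a, α a * tcNormG m d (pushM ι (v a)) ≤
      2 * C * ∑ e, β e * gdistM (ι (p e)) (ι (q e)) := by
  have hN : (0:ℝ) < Fintype.card X := by exact_mod_cast Fintype.card_pos
  set N : ℝ := (Fintype.card X : ℝ) with hNdef
  obtain ⟨r, hr0, hr1, hr2⟩ := exists_radius (Fintype.card X)
  let V : ℝ := ∑ a, ‖v a‖ + 1
  have hV : 0 < V := by positivity
  let t : ℝ := (1 - r) / V
  have ht : 0 < t := div_pos (by linarith) hV
  have hrt : ∀ a, r + t * ‖v a‖ ≤ 1 := by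
    intro a
    have h1 : ‖v a‖ ≤ V := by
      have := Finset.single_le_sum (f := fun a => ‖v a‖) (fun a _ => norm_nonneg _) (Finset.mem_univ a)
      simp only [V]; linarith
    have : t * ‖v a‖ ≤ t * V := mul_le_mul_of_nonneg_left h1 ht.le
    have : t * V = 1 - r := by simp only [t]; field_simp
    linarith
  -- the main estimate with an error term
  have main : ∀ ε : ℝ, 0 < ε → ∑ a, α a * tcNormG m d (pushM ι (v a)) ≤
      2 * C * ∑ e, β e * gdistM (ι (p e)) (ι (q e)) + ε * (2 * N / t * ∑ a, α a) := by
    intro ε hε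
    let Ψ : (X → ℝ) → L1Space := fun x => F (pmeas ι x)
    have hKnn : 0 ≤ C * (d * m) := by positivity
    let K : NNReal := ⟨C * (d * m), hKnn⟩
    have hΨn : ∀ x y, ‖Ψ x - Ψ y‖ ≤ K * ‖x - y‖ := by
      intro x y
      refine ((hF _ _).2).trans ?_
      have := mul_le_mul_of_nonneg_left (tc_pmeas_lip ι x y) hC
      show _ ≤ C * (d * m) * ‖x - y‖
      linarith
    have hΨ : LipschitzWith K Ψ := LipschitzWith.of_dist_le_mul fun x y => by
      rw [dist_eq_norm, dist_eq_norm]; exact hΨn x y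
    have hcpt : IsCompact ((fun z : (X → ℝ) × (X → ℝ) => Ψ z.1 - Ψ z.2) ''
        (Metric.closedBall 0 1 ×ˢ Metric.closedBall 0 1)) := by
      apply ((isCompact_closedBall _ _).prod (isCompact_closedBall _ _)).image
      exact (hΨ.continuous.comp continuous_fst).sub (hΨ.continuous.comp continuous_snd)
    obtain ⟨Λ, _, P, hP1, hP2, hP3⟩ := exists_finite_rank _ hcpt ε hε
    let φ : Λ → (X → ℝ) → ℝ := fun l x => P l (Ψ x)
    have hφsum : ∀ x y, ∑ l, |φ l x - φ l y| ≤ ‖Ψ x - Ψ y‖ := by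
      intro x y
      refine le_trans (le_of_eq ?_) (hP2 (Ψ x - Ψ y))
      exact Finset.sum_congr rfl fun l _ => by rw [hP1]
    have hφ : ∀ l, LipschitzWith K (φ l) := fun l => LipschitzWith.of_dist_le_mul fun x y => by
      rw [Real.dist_eq, dist_eq_norm]
      exact (Finset.single_le_sum (f := fun l => |φ l x - φ l y|) (fun l _ => abs_nonneg _)
        (Finset.mem_univ l)).trans ((hφsum x y).trans (hΨn x y))
    have volr : volume.real (Metric.ball (0 : X → ℝ) r) = (2 * r) ^ Fintype.card X := by
      rw [measureReal_def, Real.volume_pi_ball _ hr0, ENNReal.toReal_ofReal (by positivity)]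
    have vol1 : volume.real (Metric.ball (0 : X → ℝ) 1) = 2 ^ Fintype.card X := by
      rw [measureReal_def, Real.volume_pi_ball _ one_pos, ENNReal.toReal_ofReal (by positivity), mul_one]
    have hintegr : ∀ l w, IntegrableOn (fun x => |fderiv ℝ (φ l) x w|) (Metric.ball 0 1) volume := by
      intro l w
      refine Measure.integrableOn_of_bounded (M := K * ‖w‖) (by simp [Real.volume_pi_ball]) ?_ ?_
      · exact (measurable_fderiv_apply_const ℝ (φ l) w).norm.aestronglyMeasurable
      · refine Filter.Eventually.of_forall fun x => ?_
        rw [Real.norm_eq_abs, abs_abs, ← Real.norm_eq_abs]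
        exact ((fderiv ℝ (φ l) x).le_opNorm w).trans
          (mul_le_mul_of_nonneg_right (norm_fderiv_le_of_lipschitz ℝ (hφ l)) (norm_nonneg _))
    -- lower estimate
    have low : ∀ a, (t / (2 * N) * tcNormG m d (pushM ι (v a)) - ε) * (2 * r) ^ Fintype.card X ≤
        t * ∑ l, ∫ x in Metric.ball 0 1, |fderiv ℝ (φ l) x (v a)| := by
      intro a
      calc (t / (2 * N) * tcNormG m d (pushM ι (v a)) - ε) * (2 * r) ^ Fintype.card X
          = ∫ x in Metric.ball (0 : X → ℝ) r, (t / (2 * N) * tcNormG m d (pushM ι (v a)) - ε) := by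
            rw [setIntegral_const, volr, smul_eq_mul, mul_comm]
        _ ≤ ∫ x in Metric.ball (0 : X → ℝ) r, ∑ l, |φ l (x + t • v a) - φ l x| := by
            apply setIntegral_mono_on
            · exact integrableOn_ball_of_continuous continuous_const r
            · apply integrableOn_ball_of_continuous
              have : ∀ l, Continuous (φ l) := fun l => (hφ l).continuous
              fun_prop
            · exact measurableSet_ball
            · intro x hx
              rw [mem_ball_zero_iff] at hx
              have hx1 : ‖x‖ ≤ 1 := by linarith
              have hx2 : ‖x + t • v a‖ ≤ 1 := by
                refine (norm_add_le _ _).trans ?_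
                rw [norm_smul, Real.norm_of_nonneg ht.le]
                linarith [hrt a]
              rw [← pmeas_incr ι x (v a) (hv a) t ht hx1 hx2]
              have h1 := (hF (pmeas ι (x + t • v a)) (pmeas ι x)).1
              have h2 := hP3 (Ψ (x + t • v a) - Ψ x) ⟨(x + t • v a, x), ⟨by simpa using hx2, by simpa using hx1⟩, rfl⟩
              have h3 : ∑ l, |P l (Ψ (x + t • v a) - Ψ x)| = ∑ l, |φ l (x + t • v a) - φ l x| :=
                Finset.sum_congr rfl fun l _ => by rw [hP1]
              rw [h3] at h2
              have h4 : ‖Ψ (x + t • v a) - Ψ x‖ = ‖F (pmeas ι (x + t • v a)) - F (pmeas ι x)‖ := rfl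
              linarith
        _ = ∑ l, ∫ x in Metric.ball (0 : X → ℝ) r, |φ l (x + t • v a) - φ l x| := by
            apply integral_finsetSum
            intro l _
            apply integrableOn_ball_of_continuous
            have : Continuous (φ l) := (hφ l).continuous
            fun_prop
        _ ≤ ∑ l, t * ∫ x in Metric.ball 0 1, |fderiv ℝ (φ l) x (v a)| :=
            Finset.sum_le_sum fun l _ => lip_increment_le (φ l) K (hφ l) (v a) r t ht (hrt a)
        _ = _ := by rw [Finset.mul_sum]
    -- pointwise upper estimate
    have hdiff : ∀ᵐ x ∂(volume.restrict (Metric.ball (0 : X → ℝ) 1)),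
        ∀ l, DifferentiableAt ℝ (φ l) x := by
      rw [ae_all_iff]
      intro l
      exact ae_restrict_of_ae ((hφ l).ae_differentiableAt)
    have up : ∀ᵐ x ∂(volume.restrict (Metric.ball (0 : X → ℝ) 1)),
        ∑ a, α a * ∑ l, |fderiv ℝ (φ l) x (v a)| ≤
          C / (2 * N) * ∑ e, β e * gdistM (ι (p e)) (ι (q e)) := by
      filter_upwards [hdiff, ae_restrict_mem measurableSet_ball] with x hx hxB
      have h1 : ∀ (l : Λ) (w : X → ℝ), fderiv ℝ (φ l) x w = ∑ z, fderiv ℝ (φ l) x (Pi.single z 1) * w z := by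
        intro l w
        conv_lhs => rw [← Finset.univ_sum_single w]
        rw [map_sum]
        refine Finset.sum_congr rfl fun z _ => ?_
        have : (Pi.single z (w z) : X → ℝ) = w z • Pi.single z 1 := by
          rw [← Pi.single_smul]; simp
        rw [this, map_smul, smul_eq_mul, mul_comm]
      have h2 : ∀ e, ∑ l, |fderiv ℝ (φ l) x (dip (p e) (q e))| ≤ C / (2 * N) * gdistM (ι (p e)) (ι (q e)) := by
        intro e
        have hlim : Filter.Tendsto (fun s : ℝ => ∑ l, |s⁻¹ • (φ l (x + s • dip (p e) (q e)) - φ l x)|)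
            (nhdsWithin 0 (Set.Ioi 0)) (nhds (∑ l, |fderiv ℝ (φ l) x (dip (p e) (q e))|)) := by
          apply tendsto_finsetSum
          intro l _
          exact ((((hx l).hasFDerivAt.hasLineDerivAt (dip (p e) (q e))).tendsto_slope_zero).mono_left
            (nhdsWithin_mono _ (fun s hs => ne_of_gt hs))).abs
        refine le_of_tendsto hlim ?_
        have hopen : ∀ᶠ s in nhdsWithin (0:ℝ) (Set.Ioi 0), x + s • dip (p e) (q e) ∈ Metric.ball (0 : X → ℝ) 1 := by
          apply Filter.Eventually.filter_mono nhdsWithin_le_nhds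
          have hcont : Continuous (fun s : ℝ => x + s • dip (p e) (q e)) := by fun_prop
          apply hcont.continuousAt.eventually
          apply Metric.isOpen_ball.mem_nhds
          simpa using hxB
        filter_upwards [hopen, self_mem_nhdsWithin] with s hs hs0
        have hs0 : 0 < s := hs0
        rw [mem_ball_zero_iff] at hs hxB
        have e1 : ∑ l, |s⁻¹ • (φ l (x + s • dip (p e) (q e)) - φ l x)| =
            s⁻¹ * ∑ l, |φ l (x + s • dip (p e) (q e)) - φ l x| := by
          rw [Finset.mul_sum]
          refine Finset.sum_congr rfl fun l _ => ?_
          rw [smul_eq_mul, abs_mul, abs_of_pos (inv_pos.2 hs0)]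
        rw [e1, inv_mul_le_iff₀ hs0]
        refine (hφsum _ _).trans (((hF _ _).2).trans ?_)
        rw [pmeas_incr ι x (dip (p e) (q e)) (sum_dip _ _) s hs0 hxB.le hs.le]
        have h5 : C * (s / (2 * N) * tcNormG m d (pushM ι (dip (p e) (q e)))) ≤
            C * (s / (2 * N) * gdistM (ι (p e)) (ι (q e))) := by
          apply mul_le_mul_of_nonneg_left _ hC
          exact mul_le_mul_of_nonneg_left (tc_dip ι _ _) (by positivity)
        refine h5.trans (le_of_eq ?_)
        ring
      calc ∑ a, α a * ∑ l, |fderiv ℝ (φ l) x (v a)|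
          = ∑ l, ∑ a, α a * |∑ z, fderiv ℝ (φ l) x (Pi.single z 1) * v a z| := by
            rw [Finset.sum_comm]
            refine Finset.sum_congr rfl fun a _ => ?_
            rw [Finset.mul_sum]
            exact Finset.sum_congr rfl fun l _ => by rw [h1]
        _ ≤ ∑ l, ∑ e, β e * |fderiv ℝ (φ l) x (Pi.single (p e) 1) - fderiv ℝ (φ l) x (Pi.single (q e) 1)| :=
            Finset.sum_le_sum fun l _ => hS (fun z => fderiv ℝ (φ l) x (Pi.single z 1))
        _ = ∑ e, β e * ∑ l, |fderiv ℝ (φ l) x (dip (p e) (q e))| := by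
            rw [Finset.sum_comm]
            refine Finset.sum_congr rfl fun e _ => ?_
            rw [Finset.mul_sum]
            exact Finset.sum_congr rfl fun l _ => by rw [dip, map_sub]
        _ ≤ ∑ e, β e * (C / (2 * N) * gdistM (ι (p e)) (ι (q e))) :=
            Finset.sum_le_sum fun e _ => mul_le_mul_of_nonneg_left (h2 e) (hβ e)
        _ = _ := by
            rw [Finset.mul_sum]
            exact Finset.sum_congr rfl fun e _ => by ring
    -- integrate
    have tot : ∑ a, α a * ∑ l, ∫ x in Metric.ball 0 1, |fderiv ℝ (φ l) x (v a)| ≤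
        C / (2 * N) * (∑ e, β e * gdistM (ι (p e)) (ι (q e))) * 2 ^ Fintype.card X := by
      calc ∑ a, α a * ∑ l, ∫ x in Metric.ball 0 1, |fderiv ℝ (φ l) x (v a)|
          = ∫ x in Metric.ball 0 1, ∑ a, α a * ∑ l, |fderiv ℝ (φ l) x (v a)| := by
            rw [integral_finsetSum]
            · refine Finset.sum_congr rfl fun a _ => ?_
              rw [integral_const_mul, integral_finsetSum]
              intro l _
              exact hintegr l _
            · intro a _
              exact (integrable_finsetSum _ fun l _ => hintegr l _).const_mul _
        _ ≤ ∫ x in Metric.ball (0 : X → ℝ) 1, C / (2 * N) * ∑ e, β e * gdistM (ι (p e)) (ι (q e)) := by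
            apply integral_mono_ae
            · exact integrable_finsetSum _ fun a _ => (integrable_finsetSum _ fun l _ => hintegr l _).const_mul _
            · exact integrableOn_ball_of_continuous continuous_const 1
            · exact up
        _ = _ := by rw [setIntegral_const, vol1, smul_eq_mul, mul_comm]
    set R := ∑ e, β e * gdistM (ι (p e)) (ι (q e)) with hR
    have hR0 : 0 ≤ R := Finset.sum_nonneg fun e _ => mul_nonneg (hβ e) (Finset.sum_nonneg fun i _ => abs_nonneg _)
    have comb : (t / (2 * N) * ∑ a, α a * tcNormG m d (pushM ι (v a)) - ε * ∑ a, α a) * (2 * r) ^ Fintype.card X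
        ≤ t * (C / (2 * N) * R * 2 ^ Fintype.card X) := by
      refine le_trans ?_ (mul_le_mul_of_nonneg_left tot ht.le)
      have := Finset.sum_le_sum fun a (_ : a ∈ Finset.univ) => mul_le_mul_of_nonneg_left (low a) (hα a)
      refine le_trans (le_of_eq ?_) (this.trans (le_of_eq ?_))
      · rw [Finset.mul_sum, Finset.mul_sum, ← Finset.sum_sub_distrib, Finset.sum_mul]
        exact Finset.sum_congr rfl fun a _ => by ring
      · rw [Finset.mul_sum]
        exact Finset.sum_congr rfl fun a _ => by ring
    set W := ∑ a, α a * tcNormG m d (pushM ι (v a)) with hW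
    set Sα := ∑ a, α a
    rw [mul_pow] at comb
    have h2N : (0:ℝ) < 2 ^ Fintype.card X := by positivity
    have comb2 : (t / (2 * N) * W - ε * Sα) * r ^ Fintype.card X ≤ t * (C / (2 * N) * R) := by
      have : ((t / (2 * N) * W - ε * Sα) * r ^ Fintype.card X) * 2 ^ Fintype.card X ≤
        (t * (C / (2 * N) * R)) * 2 ^ Fintype.card X := by linarith
      exact le_of_mul_le_mul_right this h2N
    have hRC : 0 ≤ t * (C / (2 * N) * R) := by positivity
    have comb3 : t / (2 * N) * W - ε * Sα ≤ 2 * (t * (C / (2 * N) * R)) := by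
      by_contra hcon
      push Not at hcon
      have hpos : 0 < t / (2 * N) * W - ε * Sα := by linarith
      have := mul_le_mul_of_nonneg_left hr2 hpos.le
      linarith
    have e3 : W = (2 * N / t) * (t / (2 * N) * W) := by field_simp
    have e4 : 2 * C * R + ε * (2 * N / t * Sα) = (2 * N / t) * (2 * (t * (C / (2 * N) * R)) + ε * Sα) := by
      field_simp
    rw [e3, e4]
    apply mul_le_mul_of_nonneg_left _ (by positivity)
    linarith
  set D := 2 * N / t * ∑ a, α a with hD
  have hD0 : 0 ≤ D := mul_nonneg (by positivity) (Finset.sum_nonneg fun a _ => hα a)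
  apply le_of_forall_pos_le_add
  intro δ hδ
  refine (main (δ / (D + 1)) (by positivity)).trans ?_
  have : δ / (D + 1) * D ≤ δ := by
    rw [div_mul_eq_mul_div, div_le_iff₀ (by positivity)]
    nlinarith
  linarith

/-! ### Part 2: blocks and the Poincare inequality -/

def bl {m L : ℕ} (h : L ∣ m) (a : Fin m) (o : Fin L) : Fin m :=
  ⟨a / L * L + o, by
    obtain ⟨c, rfl⟩ := h
    have hL : 0 < L := o.pos
    have h1 : (a : ℕ) / L < c := Nat.div_lt_of_lt_mul a.2
    have h2 := o.2
    nlinarith⟩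

def rm {m L : ℕ} (h : L ∣ m) (a : Fin m) : Fin L :=
  ⟨a % L, Nat.mod_lt _ (Nat.pos_of_dvd_of_pos h a.pos)⟩

def nxt {m : ℕ} (a : Fin m) : Fin m := ⟨min (a + 1) (m - 1), by have := a.2; omega⟩

lemma rm_bl {m L : ℕ} (h : L ∣ m) (a : Fin m) (o : Fin L) : rm h (bl h a o) = o := by
  ext
  simp [rm, bl, Nat.add_mod, Nat.mod_eq_of_lt o.2]

lemma bl_bl {m L : ℕ} (h : L ∣ m) (a : Fin m) (o : Fin L) : bl h (bl h a o) (rm h a) = a := by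
  ext
  have hL : 0 < L := o.pos
  have : ((a : ℕ) / L * L + o) / L = a / L := by
    rw [mul_comm, Nat.mul_add_div hL, Nat.div_eq_of_lt o.2, add_zero]
  simp only [rm, bl, this]
  exact Nat.div_add_mod' _ _

lemma abs_sub_le_sum_range (g : ℕ → ℝ) {L r o : ℕ} (hr : r < L) (ho : o < L) :
    |g r - g o| ≤ ∑ j ∈ range L, |g (j + 1) - g j| := by
  wlog h : o ≤ r generalizing r o with H
  · rw [abs_sub_comm]
    exact H ho hr (by omega)
  rw [← Finset.sum_Ico_sub g h]
  refine (Finset.abs_sum_le_sum_abs _ _).trans ?_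
  refine Finset.sum_le_sum_of_subset_of_nonneg ?_ (fun _ _ _ => abs_nonneg _)
  intro j hj
  simp at hj ⊢
  omega

lemma chain_le {m L : ℕ} (hd : L ∣ m) (h : Fin m → ℝ) (a : Fin m) (o : Fin L) :
    |h a - h (bl hd a o)| ≤ ∑ o', |h (nxt (bl hd a o')) - h (bl hd a o')| := by
  have hL : 0 < L := o.pos
  have hm := a.pos
  let g : ℕ → ℝ := fun j => h ⟨min (a / L * L + j) (m - 1), by omega⟩
  have hg : ∀ o' : Fin L, g o' = h (bl hd a o') := by
    intro o'
    have := (bl hd a o').2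
    simp only [g]
    congr 1
    ext
    simp only [bl] at this ⊢
    omega
  have hg1 : ∀ o' : Fin L, g (o' + 1) = h (nxt (bl hd a o')) := by
    intro o'
    simp only [g]
    congr 1
  have h3 := abs_sub_le_sum_range g (rm hd a).2 o.2
  rw [← Fin.sum_univ_eq_sum_range (fun j => |g (j + 1) - g j|)] at h3
  simp only [hg1, hg] at h3
  have h4 : bl hd a (rm hd a) = a := by
    ext
    exact Nat.div_add_mod' _ _
  rwa [h4] at h3

def nx {m d : ℕ} (i : Fin d) (x : GPt m d) : GPt m d := Function.update x i (nxt (x i))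

/-- edge energy -/
def PE {m d : ℕ} (i : Fin d) (h : GPt m d → ℝ) : ℝ := ∑ x, |h (nx i x) - h x|

def zs {m d L : ℕ} (hd : L ∣ m) (s : Finset (Fin d)) (x : GPt m d) (o : GPt L d) : GPt m d :=
  fun i => if i ∈ s then bl hd (x i) (o i) else x i

def sw {m d L : ℕ} (hd : L ∣ m) (s : Finset (Fin d)) (t : GPt m d × GPt L d) :
    GPt m d × GPt L d :=
  (zs hd s t.1 t.2, fun i => if i ∈ s then rm hd (t.1 i) else t.2 i)

lemma sw_invol {m d L : ℕ} (hd : L ∣ m) (s : Finset (Fin d)) :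
    Function.Involutive (sw hd s) := by
  rintro ⟨x, o⟩
  ext i
  · simp only [sw, zs]
    split_ifs <;> simp [bl_bl]
  · simp only [sw, zs]
    split_ifs <;> simp [rm_bl]

lemma sum_zs {m d L : ℕ} (hd : L ∣ m) (s : Finset (Fin d)) (h : GPt m d → ℝ) :
    ∑ t : GPt m d × GPt L d, h (zs hd s t.1 t.2) = (L : ℝ) ^ d * ∑ x, h x := by
  have h1 : ∑ t : GPt m d × GPt L d, h (zs hd s t.1 t.2) = ∑ t : GPt m d × GPt L d, h t.1 :=
    Equiv.sum_comp (sw_invol hd s).toPerm (fun t : GPt m d × GPt L d => h t.1)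
  rw [h1, Fintype.sum_prod_type]
  simp [Finset.mul_sum]

lemma single_sw {m d L : ℕ} (hd : L ∣ m) (i : Fin d) (D : GPt m d → ℝ) :
    ∑ x : GPt m d, ∑ o : Fin L, D (Function.update x i (bl hd (x i) o)) = L * ∑ x, D x := by
  have hinv : Function.Involutive (fun t : GPt m d × Fin L =>
      ((Function.update t.1 i (bl hd (t.1 i) t.2), rm hd (t.1 i)) : GPt m d × Fin L)) := by
    rintro ⟨x, o⟩
    simp [bl_bl, rm_bl]
  rw [← Fintype.sum_prod_type']
  have h1 : ∑ t : GPt m d × Fin L, D (Function.update t.1 i (bl hd (t.1 i) t.2)) =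
      ∑ t : GPt m d × Fin L, D t.1 :=
    Equiv.sum_comp hinv.toPerm (fun t : GPt m d × Fin L => D t.1)
  rw [h1, Fintype.sum_prod_type]
  simp [Finset.mul_sum]

lemma single_le {m d L : ℕ} (hd : L ∣ m) (i : Fin d) (h : GPt m d → ℝ) :
    ∑ t : GPt m d × GPt L d, |h t.1 - h (Function.update t.1 i (bl hd (t.1 i) (t.2 i)))|
      ≤ (L : ℝ) ^ (d + 1) * PE i h := by
  calc _ ≤ ∑ t : GPt m d × GPt L d, ∑ o' : Fin L,
        |h (nx i (Function.update t.1 i (bl hd (t.1 i) o')))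
          - h (Function.update t.1 i (bl hd (t.1 i) o'))| := by
        refine Finset.sum_le_sum fun t _ => ?_
        have := chain_le hd (fun a => h (Function.update t.1 i a)) (t.1 i) (t.2 i)
        simpa [nx] using this
    _ = _ := by
        rw [Fintype.sum_prod_type]
        simp only [Finset.sum_const, ← Finset.smul_sum]
        rw [single_sw hd i (fun x => |h (nx i x) - h x|)]
        simp [PE, pow_succ, mul_assoc]

lemma poincare_s {m d L : ℕ} (hd : L ∣ m) (h : GPt m d → ℝ) (s : Finset (Fin d)) :
    ∑ t : GPt m d × GPt L d, |h t.1 - h (zs hd s t.1 t.2)|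
      ≤ (L : ℝ) ^ (d + 1) * ∑ i ∈ s, PE i h := by
  induction s using Finset.induction_on with
  | empty =>
    have : ∀ t : GPt m d × GPt L d, zs hd ∅ t.1 t.2 = t.1 := by
      intro t; ext i; simp [zs]
    simp [this]
  | insert a s ha ih =>
    rw [Finset.sum_insert ha, mul_add]
    have key : ∀ t : GPt m d × GPt L d, |h t.1 - h (zs hd (insert a s) t.1 t.2)| ≤
        |h t.1 - h (zs hd s t.1 t.2)| +
        |h ((sw hd s t).1) - h (Function.update (sw hd s t).1 a
          (bl hd ((sw hd s t).1 a) ((sw hd s t).2 a)))| := by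
      intro t
      have e : zs hd (insert a s) t.1 t.2 = Function.update (sw hd s t).1 a
          (bl hd ((sw hd s t).1 a) ((sw hd s t).2 a)) := by
        ext i
        by_cases hi : i = a
        · subst hi; simp [zs, sw, ha]
        · simp [zs, sw, hi]
      rw [e]
      exact abs_sub_le _ _ _
    refine (Finset.sum_le_sum fun t _ => key t).trans ?_
    rw [Finset.sum_add_distrib]
    have e2 := Equiv.sum_comp (sw_invol hd s).toPerm (fun t : GPt m d × GPt L d =>
      |h t.1 - h (Function.update t.1 a (bl hd (t.1 a) (t.2 a)))|)
    simp only [Function.Involutive.coe_toPerm] at e2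
    rw [e2, add_comm]
    exact add_le_add (single_le hd a h) ih

/-- the randomly moved point -/
def yy {m d L : ℕ} (hd : L ∣ m) (t : GPt m d × GPt L d) : GPt m d :=
  fun i => bl hd (t.1 i) (t.2 i)

lemma yy_eq {m d L : ℕ} (hd : L ∣ m) (t : GPt m d × GPt L d) :
    zs hd Finset.univ t.1 t.2 = yy hd t := by
  ext i; simp [zs, yy]

lemma sum_yy {m d L : ℕ} (hd : L ∣ m) (h : GPt m d → ℝ) :
    ∑ t : GPt m d × GPt L d, h (yy hd t) = (L : ℝ) ^ d * ∑ x, h x := by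
  rw [← sum_zs hd Finset.univ h]; simp only [yy_eq]

lemma sum_xx {m d L : ℕ} (h : GPt m d → ℝ) :
    ∑ t : GPt m d × GPt L d, h t.1 = (L : ℝ) ^ d * ∑ x, h x := by
  rw [Fintype.sum_prod_type]
  simp [Finset.mul_sum]

lemma poincare {m d L : ℕ} (hd : L ∣ m) (h : GPt m d → ℝ) :
    ∑ t : GPt m d × GPt L d, |h t.1 - h (yy hd t)| ≤ (L : ℝ) ^ (d + 1) * ∑ i, PE i h := by
  have := poincare_s hd h Finset.univ
  simpa only [yy_eq] using this

/-! ### Part 3: isoperimetry -/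

def fib {m d : ℕ} (S : Finset (GPt m d)) (i : Fin d) (x : GPt m d) : ℕ :=
  #{a : Fin m | Function.update x i a ∈ S}

lemma two_factor {A Y : Type*} [Fintype A] [Fintype Y] (w : A → Y → ℝ)
    (hw : ∀ a y, w a y = 0 ∨ w a y = 1) :
    ∑ a, ∑ y, w a y * (Real.log (∑ y', w a y') + Real.log (∑ a', w a' y)) ≤
      (∑ a, ∑ y, w a y) * Real.log (∑ a, ∑ y, w a y) := by
  set n := ∑ a, ∑ y, w a y with hn
  have hw0 : ∀ a y, 0 ≤ w a y := by
    intro a y; rcases hw a y with h | h <;> simp [h]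
  have hw1 : ∀ a y, w a y ≤ 1 := by
    intro a y; rcases hw a y with h | h <;> simp [h]
  have hn0 : 0 ≤ n := Finset.sum_nonneg fun a _ => Finset.sum_nonneg fun y _ => hw0 a y
  have hr0 : ∀ a, 0 ≤ ∑ y', w a y' := fun a => Finset.sum_nonneg fun y _ => hw0 a y
  have hc0 : ∀ y, 0 ≤ ∑ a', w a' y := fun y => Finset.sum_nonneg fun a _ => hw0 a y
  have hrn : ∀ a, ∑ y', w a y' ≤ n := fun a =>
    Finset.single_le_sum (f := fun a => ∑ y', w a y') (fun a _ => hr0 a) (Finset.mem_univ a)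
  have key : ∀ a y, w a y * (Real.log (∑ y', w a y') + Real.log (∑ a', w a' y)) ≤
      w a y * Real.log n + ((∑ y', w a y') * (∑ a', w a' y) / n - w a y) := by
    intro a y
    rcases hw a y with h | h
    · simp only [h, zero_mul, sub_zero, zero_add]
      have := hr0 a; have := hc0 y
      positivity
    · have h1 : 0 < ∑ y', w a y' := by
        have := Finset.single_le_sum (f := fun y' => w a y') (fun y _ => hw0 a y) (Finset.mem_univ y)
        simp only [h] at this
        linarith
      have h2 : 0 < ∑ a', w a' y := by
        have := Finset.single_le_sum (f := fun a' => w a' y) (fun a _ => hw0 a y) (Finset.mem_univ a)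
        simp only [h] at this
        linarith
      have h3 : 0 < n := h1.trans_le (hrn a)
      rw [h]
      have h4 := Real.log_le_sub_one_of_pos
        (show 0 < (∑ y', w a y') * (∑ a', w a' y) / n by positivity)
      rw [Real.log_div (by positivity) h3.ne', Real.log_mul h1.ne' h2.ne'] at h4
      linarith
  refine (Finset.sum_le_sum fun a _ => Finset.sum_le_sum fun y _ => key a y).trans ?_
  simp only [Finset.sum_add_distrib, Finset.sum_sub_distrib, ← Finset.sum_mul, ← Finset.sum_div,
    ← Finset.mul_sum]
  rw [Finset.sum_comm (f := fun y a => w a y), ← hn]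
  rcases hn0.eq_or_lt with h | h
  · simp [← h]
  · have : n * n / n = n := by field_simp
    rw [this]; linarith

lemma entropy {m : ℕ} (d : ℕ) (S : Finset (GPt m d)) :
    ∑ x ∈ S, ∑ i, Real.log (fib S i x) ≤ #S * Real.log #S := by
  induction d with
  | zero =>
    simp only [Finset.univ_eq_empty, Finset.sum_empty, Finset.sum_const_zero]
    rcases Nat.eq_zero_or_pos (#S) with h | h
    · simp [h]
    · have : (1 : ℝ) ≤ #S := by exact_mod_cast h
      exact mul_nonneg (by positivity) (Real.log_nonneg this)
  | succ d ih =>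
    let Sl : Fin m → Finset (GPt m d) := fun a => {y | (Fin.cons a y : GPt m (d + 1)) ∈ S}
    let w : Fin m → GPt m d → ℝ := fun a y => if (Fin.cons a y : GPt m (d + 1)) ∈ S then 1 else 0
    have sumS : ∀ g : GPt m (d + 1) → ℝ, ∑ x ∈ S, g x = ∑ a, ∑ y, w a y * g (Fin.cons a y) := by
      intro g
      rw [← Fintype.sum_prod_type']
      have := Equiv.sum_comp (Fin.consEquiv (fun _ : Fin (d + 1) => Fin m))
        (fun x => if x ∈ S then g x else 0)
      simp only [Finset.sum_ite_mem, Finset.univ_inter] at this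
      rw [← this]
      refine Finset.sum_congr rfl fun t _ => ?_
      simp only [w, Fin.consEquiv, ite_mul, one_mul, zero_mul]
      rfl
    have hcard : (#S : ℝ) = ∑ a, ∑ y, w a y := by
      have := sumS (fun _ => 1)
      simpa using this
    have hrow : ∀ a, ∑ y, w a y = #(Sl a) := by
      intro a; simp [w, Sl]
    have hcol : ∀ a y, (fib S 0 (Fin.cons a y : GPt m (d + 1)) : ℝ) = ∑ a', w a' y := by
      intro a y; simp [w, fib]
    have hsucc : ∀ a y j, fib S (Fin.succ j) (Fin.cons a y : GPt m (d + 1)) = fib (Sl a) j y := by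
      intro a y j
      simp only [fib, Sl, Finset.mem_filter, Finset.mem_univ, true_and, Fin.cons_update]
    have h2 := two_factor w (by intro a y; simp only [w]; split_ifs <;> simp)
    rw [← hcard] at h2
    refine le_trans ?_ h2
    rw [sumS]
    refine Finset.sum_le_sum fun a _ => ?_
    simp only [Fin.sum_univ_succ, hcol, hsucc, hrow, mul_add, Finset.sum_add_distrib]
    rw [add_comm]
    refine add_le_add ?_ le_rfl
    have h3 := ih (Sl a)
    have e1 : ∀ g : GPt m d → ℝ, ∑ y, w a y * g y = ∑ y ∈ Sl a, g y := by
      intro g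
      simp [w, Sl, Finset.sum_filter]
    rw [e1, e1]
    simpa using h3

def ind {X : Type*} [DecidableEq X] (S : Finset X) (x : X) : ℝ := if x ∈ S then 1 else 0

lemma bl_self {m : ℕ} (a o : Fin m) : bl (dvd_refl m) a o = o := by
  ext; simp [bl, Nat.div_eq_of_lt a.2]

lemma fib_update {m d : ℕ} (S : Finset (GPt m d)) (i : Fin d) (x : GPt m d) (a : Fin m) :
    fib S i (Function.update x i a) = fib S i x := by
  simp [fib]

lemma fib_bound {m d : ℕ} (S : Finset (GPt m d)) (i : Fin d) :
    ∑ x ∈ S, ((m : ℝ) / fib S i x - 1) ≤ m * PE i (ind S) := by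
  rcases Nat.eq_zero_or_pos m with rfl | hm
  · simp
  have hm' : (0 : ℝ) < m := by exact_mod_cast hm
  have hA := single_sw (dvd_refl m) i (fun x => ind S x * ((m : ℝ) / fib S i x - 1))
  have hB := single_sw (dvd_refl m) i (fun x => |ind S (nx i x) - ind S x|)
  simp only [bl_self, fib_update] at hA hB
  have e1 : ∑ x ∈ S, ((m : ℝ) / fib S i x - 1) = ∑ x, ind S x * ((m : ℝ) / fib S i x - 1) := by
    simp [ind]
  rw [e1, PE]
  refine le_of_mul_le_mul_left ?_ hm'
  rw [← hA, mul_left_comm, ← hB, Finset.mul_sum]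
  refine Finset.sum_le_sum fun x _ => ?_
  rw [← Finset.sum_mul]
  have e2 : ∑ a, ind S (Function.update x i a) = fib S i x := by simp [ind, fib]
  rw [e2]
  have hR : 0 ≤ ∑ a : Fin m, |ind S (nx i (Function.update x i a)) - ind S (Function.update x i a)| :=
    Finset.sum_nonneg fun _ _ => abs_nonneg _
  have hfm : fib S i x ≤ m := by
    have := Finset.card_le_univ {a : Fin m | Function.update x i a ∈ S}
    simpa [fib] using this
  rcases Nat.eq_zero_or_pos (fib S i x) with h0 | h0
  · rw [h0]; simp; positivity
  have h0' : (0 : ℝ) < fib S i x := by exact_mod_cast h0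
  have e3 : (fib S i x : ℝ) * ((m : ℝ) / fib S i x - 1) = m - fib S i x := by field_simp
  rw [e3]
  rcases hfm.eq_or_lt with h1 | h1
  · rw [h1]; simp; positivity
  have : 1 ≤ ∑ a : Fin m, |ind S (nx i (Function.update x i a)) - ind S (Function.update x i a)| := by
    obtain ⟨a, ha⟩ := Finset.card_pos.1 h0
    obtain ⟨b, hb⟩ : ∃ b, Function.update x i b ∉ S := by
      by_contra hcon
      push Not at hcon
      simp [fib, hcon] at h1
    have h5 := chain_le (dvd_refl m) (fun c => ind S (Function.update x i c)) a b
    simp only [bl_self] at h5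
    simp at ha
    simp only [nx, Function.update_idem, Function.update_self]
    refine le_trans ?_ h5
    simp [ind, ha, hb]
  nlinarith

lemma fib_pos {m d : ℕ} (S : Finset (GPt m d)) (i : Fin d) {x : GPt m d} (hx : x ∈ S) :
    0 < fib S i x := Finset.card_pos.2 ⟨x i, by simpa using hx⟩

lemma isoper {m d : ℕ} (hd : 0 < d) (hm : 0 < m) (S : Finset (GPt m d)) :
    d * #S * (Real.exp ((d * Real.log m - Real.log #S) / d) - 1) ≤ m * ∑ i, PE i (ind S) := by
  set τ := (d * Real.log m - Real.log #S) / d with hτ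
  have hd' : (0 : ℝ) < d := by exact_mod_cast hd
  have hm' : (0 : ℝ) < m := by exact_mod_cast hm
  have h1 : ∑ x ∈ S, ∑ i, ((m : ℝ) / fib S i x - 1) ≤ m * ∑ i, PE i (ind S) := by
    rw [Finset.sum_comm, Finset.mul_sum]
    exact Finset.sum_le_sum fun i _ => fib_bound S i
  refine le_trans ?_ h1
  have h2 : ∀ x ∈ S, ∀ i, Real.exp τ * (1 - τ + Real.log m - Real.log (fib S i x)) - 1 ≤
      (m : ℝ) / fib S i x - 1 := by
    intro x hx i
    have h0' : (0 : ℝ) < fib S i x := by exact_mod_cast fib_pos S i hx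
    have h3 := Real.add_one_le_exp (Real.log ((m : ℝ) / fib S i x) - τ)
    rw [Real.exp_sub, Real.exp_log (by positivity), Real.log_div hm'.ne' h0'.ne',
      le_div_iff₀ (Real.exp_pos τ)] at h3
    linarith
  refine le_trans ?_ (Finset.sum_le_sum fun x hx => Finset.sum_le_sum fun i _ => h2 x hx i)
  have h4 := entropy d S
  have e : ∑ x ∈ S, ∑ i : Fin d, (Real.exp τ * (1 - τ + Real.log m - Real.log (fib S i x)) - 1)
      = Real.exp τ * (#S * (d * (1 - τ + Real.log m)) - ∑ x ∈ S, ∑ i, Real.log (fib S i x))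
        - #S * d := by
    simp only [Finset.sum_sub_distrib, ← Finset.mul_sum, Finset.sum_const, nsmul_eq_mul,
      Finset.card_univ, Fintype.card_fin, mul_one]
    ring
  rw [e]
  have h5 : (d : ℝ) * τ = d * Real.log m - Real.log #S := by rw [hτ]; field_simp
  have h6 : (#S : ℝ) * d ≤
      #S * (d * (1 - τ + Real.log m)) - ∑ x ∈ S, ∑ i, Real.log (fib S i x) := by
    have : (#S : ℝ) * (d * (1 - τ + Real.log m)) = #S * d + #S * Real.log #S := by
      have : (d : ℝ) * (1 - τ + Real.log m) = d + Real.log #S := by linarith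
      rw [this]; ring
    linarith
  have := mul_le_mul_of_nonneg_left h6 (Real.exp_pos τ).le
  linarith

/-! ### Part 4: averages over products -/

def av {ι : Type*} [Fintype ι] (f : ι → ℝ) : ℝ := (∑ i, f i) / Fintype.card ι

lemma av_mono {ι : Type*} [Fintype ι] {f g : ι → ℝ} (h : ∀ i, f i ≤ g i) : av f ≤ av g :=
  div_le_div_of_nonneg_right (Finset.sum_le_sum fun i _ => h i) (by positivity)

lemma av_nonneg {ι : Type*} [Fintype ι] {f : ι → ℝ} (h : ∀ i, 0 ≤ f i) : 0 ≤ av f :=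
  div_nonneg (Finset.sum_nonneg fun i _ => h i) (by positivity)

lemma av_const {ι : Type*} [Fintype ι] [Nonempty ι] (c : ℝ) : av (fun _ : ι => c) = c := by
  have : (Fintype.card ι : ℝ) ≠ 0 := by exact_mod_cast Fintype.card_ne_zero
  simp [av]

lemma av_add {ι : Type*} [Fintype ι] (f g : ι → ℝ) :
    av (fun i => f i + g i) = av f + av g := by
  simp [av, Finset.sum_add_distrib, add_div]

lemma av_sub {ι : Type*} [Fintype ι] (f g : ι → ℝ) :
    av (fun i => f i - g i) = av f - av g := by
  simp [av, Finset.sum_sub_distrib, sub_div]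

lemma av_mul {ι : Type*} [Fintype ι] (c : ℝ) (f : ι → ℝ) :
    av (fun i => c * f i) = c * av f := by
  simp [av, ← Finset.mul_sum, mul_div_assoc]

lemma av_sum {ι κ : Type*} [Fintype ι] (s : Finset κ) (f : κ → ι → ℝ) :
    av (fun i => ∑ k ∈ s, f k i) = ∑ k ∈ s, av (f k) := by
  simp only [av]
  rw [Finset.sum_comm, Finset.sum_div]

lemma av_prod {ι κ : Type*} [Fintype ι] [Fintype κ] (f : ι → κ → ℝ) :
    av (fun t : ι × κ => f t.1 t.2) = av (fun i => av (fun k => f i k)) := by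
  simp only [av, Fintype.sum_prod_type, Fintype.card_prod, ← Finset.sum_div]
  push_cast
  rw [div_div, mul_comm]

lemma av_equiv {ι κ : Type*} [Fintype ι] [Fintype κ] (e : ι ≃ κ) (f : κ → ℝ) :
    av (fun i => f (e i)) = av f := by
  simp only [av, Equiv.sum_comp, Fintype.card_congr e]

lemma av_split {J T : Type*} [Fintype J] [DecidableEq J] [Fintype T] (j : J)
    (f : T → ({i // i ≠ j} → T) → ℝ) :
    av (fun ω : J → T => f (ω j) (fun i => ω i)) = av (fun a => av (fun r => f a r)) := by
  rw [← av_prod, ← av_equiv (Equiv.funSplitAt j T)]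
  rfl

lemma av_coord {J T : Type*} [Fintype J] [DecidableEq J] [Fintype T] [Nonempty T] (j : J)
    (g : T → ℝ) : av (fun ω : J → T => g (ω j)) = av g := by
  rw [av_split j (fun a _ => g a)]
  simp only [av_const]

lemma av_coord2 {J T : Type*} [Fintype J] [DecidableEq J] [Fintype T] [Nonempty T] {j k : J}
    (hjk : k ≠ j) (g : T → T → ℝ) :
    av (fun ω : J → T => g (ω j) (ω k)) = av (fun a => av (fun b => g a b)) := by
  rw [av_split j (fun a r => g a (r ⟨k, hjk⟩))]
  simp only [av_coord]

lemma av_sq_le {ι : Type*} [Fintype ι] [Nonempty ι] (f : ι → ℝ) :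
    (av f) ^ 2 ≤ av (fun i => (f i) ^ 2) := by
  have h : 0 ≤ av (fun i => (f i - av f) ^ 2) := av_nonneg fun i => sq_nonneg _
  have e : (fun i => (f i - av f) ^ 2) = fun i => ((f i) ^ 2 - (2 * av f) * f i) + (av f) ^ 2 := by
    funext i; ring
  rw [e, av_add, av_sub, av_mul, av_const] at h
  linarith

lemma av_abs_sum_le {T : Type*} [Fintype T] [Nonempty T] (n : ℕ) (g : T → ℝ) :
    av (fun ω : Fin n → T => |∑ j, g (ω j)|) ≤ n * av (fun t => |g t|) := by
  calc _ ≤ av (fun ω : Fin n → T => ∑ j, |g (ω j)|) :=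
        av_mono fun ω => Finset.abs_sum_le_sum_abs _ _
    _ = _ := by
        rw [av_sum]
        simp only [av_coord _ (fun t => |g t|)]
        simp

lemma av_abs_sum_sq_le {T : Type*} [Fintype T] [Nonempty T] (n : ℕ) (g : T → ℝ)
    (hg : av g = 0) :
    (av (fun ω : Fin n → T => |∑ j, g (ω j)|)) ^ 2 ≤ n * av (fun t => (g t) ^ 2) := by
  refine (av_sq_le _).trans (le_of_eq ?_)
  simp only [sq_abs]
  simp only [sq, Finset.sum_mul_sum]
  rw [av_sum]
  simp only [av_sum]
  have : ∀ j k : Fin n, av (fun ω : Fin n → T => g (ω j) * g (ω k)) =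
      if j = k then av (fun t => g t * g t) else 0 := by
    intro j k
    split_ifs with h
    · subst h
      exact av_coord j (fun t => g t * g t)
    · rw [av_coord2 (Ne.symm h) (fun a b => g a * g b)]
      simp only [av_mul, hg, mul_zero]
      simp [av]
  simp only [this]
  simp

/-! ### Part 5: one scale, one set -/

def muv {m d L n : ℕ} (hd : L ∣ m) (ω : Fin n → GPt m d × GPt L d) (z : GPt m d) : ℝ :=
  (∑ j, dip (ω j).1 (yy hd (ω j)) z) / n

lemma sum_mul_muv {m d L n : ℕ} (hd : L ∣ m) (ω : Fin n → GPt m d × GPt L d) (f : GPt m d → ℝ) :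
    ∑ z, f z * muv hd ω z = (∑ j, (f (ω j).1 - f (yy hd (ω j)))) / n := by
  simp only [muv, mul_div_assoc', ← Finset.sum_div, Finset.mul_sum]
  rw [Finset.sum_comm]
  simp only [sum_mul_dip]

lemma sum_muv {m d L n : ℕ} (hd : L ∣ m) (ω : Fin n → GPt m d × GPt L d) :
    ∑ z, muv hd ω z = 0 := by
  have := sum_mul_muv hd ω (fun _ => 1)
  simpa using this

lemma card_T (m d L : ℕ) : (Fintype.card (GPt m d × GPt L d) : ℝ) = (m : ℝ) ^ d * (L : ℝ) ^ d := by
  simp [Fintype.card_prod]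

lemma sum_ind {X : Type*} [Fintype X] [DecidableEq X] (S : Finset X) : ∑ x, ind S x = #S := by
  simp [ind]

lemma ind_cases {X : Type*} [DecidableEq X] (S : Finset X) (x : X) : ind S x = 0 ∨ ind S x = 1 := by
  unfold ind; split_ifs <;> simp

lemma set_scale {m d L n M : ℕ} (hm : 0 < m) (hL : 0 < L) (hd0 : 0 < d) (hM : 0 < M) (hd : L ∣ m)
    (hn : (n : ℝ) * (L : ℝ) ^ d = M * (m : ℝ) ^ d) (S : Finset (GPt m d)) :
    (m : ℝ) ^ d / L * av (fun ω : Fin n → GPt m d × GPt L d => |∑ z, ind S z * muv hd ω z|)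
      ≤ min (2 * (#S : ℝ) / L) (√((∑ i, PE i (ind S)) * (L : ℝ) ^ (d - 1) / M)) := by
  have : NeZero m := ⟨hm.ne'⟩
  have : NeZero L := ⟨hL.ne'⟩
  have hm' : (0 : ℝ) < m := by exact_mod_cast hm
  have hL' : (0 : ℝ) < L := by exact_mod_cast hL
  have hM' : (0 : ℝ) < M := by exact_mod_cast hM
  have hN : (0 : ℝ) < (m : ℝ) ^ d := by positivity
  have hLd : (0 : ℝ) < (L : ℝ) ^ d := by positivity
  have hn0 : (0 : ℝ) < n := by
    have h1 : (0 : ℝ) < n * (L : ℝ) ^ d := by rw [hn]; positivity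
    exact pos_of_mul_pos_left h1 hLd.le
  set P := ∑ i, PE i (ind S) with hP
  have hP0 : 0 ≤ P := Finset.sum_nonneg fun i _ => Finset.sum_nonneg fun x _ => abs_nonneg _
  set g : GPt m d × GPt L d → ℝ := fun t => ind S t.1 - ind S (yy hd t) with hg
  have hg0 : av g = 0 := by
    simp only [av, hg, Finset.sum_sub_distrib, sum_yy, sum_xx]
    simp
  have hg2 : ∀ t, (g t) ^ 2 = |g t| := by
    intro t
    simp only [hg]
    rcases ind_cases S t.1 with h | h <;> rcases ind_cases S (yy hd t) with h' | h' <;> simp [h, h']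
  have hgle : ∀ t, |g t| ≤ ind S t.1 + ind S (yy hd t) := by
    intro t
    simp only [hg]
    rcases ind_cases S t.1 with h | h <;> rcases ind_cases S (yy hd t) with h' | h' <;> simp [h, h']
  have hgA : av (fun t => |g t|) ≤ 2 * #S / (m : ℝ) ^ d := by
    refine (av_mono hgle).trans (le_of_eq ?_)
    simp only [av, Finset.sum_add_distrib, sum_yy, sum_xx, card_T, sum_ind]
    field_simp
    ring
  have hgB : av (fun t => |g t|) ≤ L * P / (m : ℝ) ^ d := by
    have h1 := poincare hd (ind S)
    rw [← hP] at h1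
    simp only [av, card_T]
    rw [div_le_div_iff₀ (by positivity) hN]
    refine (mul_le_mul_of_nonneg_right h1 hN.le).trans (le_of_eq ?_)
    ring
  set B := av (fun ω : Fin n → GPt m d × GPt L d => |∑ j, g (ω j)|) with hB
  have hB0 : 0 ≤ B := av_nonneg fun _ => abs_nonneg _
  have e : av (fun ω : Fin n → GPt m d × GPt L d => |∑ z, ind S z * muv hd ω z|) = B / n := by
    simp only [sum_mul_muv, abs_div, Nat.abs_cast]
    rw [hB]
    simp only [av, ← Finset.sum_div]
    rw [div_right_comm]
  rw [e]
  have h1 : B ≤ n * (2 * #S / (m : ℝ) ^ d) :=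
    (av_abs_sum_le n g).trans (mul_le_mul_of_nonneg_left hgA hn0.le)
  have h2 : B ^ 2 ≤ n * (L * P / (m : ℝ) ^ d) := by
    refine (av_abs_sum_sq_le n g hg0).trans (mul_le_mul_of_nonneg_left ?_ hn0.le)
    simp only [hg2]
    exact hgB
  refine le_min ?_ ?_
  · calc (m : ℝ) ^ d / L * (B / n) ≤ (m : ℝ) ^ d / L * (n * (2 * #S / (m : ℝ) ^ d) / n) := by
          gcongr
      _ = _ := by field_simp
  · refine Real.le_sqrt_of_sq_le ?_
    have hnv : (n : ℝ) = M * (m : ℝ) ^ d / (L : ℝ) ^ d := by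
      field_simp; linarith
    calc ((m : ℝ) ^ d / L * (B / n)) ^ 2 = ((m : ℝ) ^ d / (L * n)) ^ 2 * B ^ 2 := by
          field_simp
      _ ≤ ((m : ℝ) ^ d / (L * n)) ^ 2 * (n * (L * P / (m : ℝ) ^ d)) := by gcongr
      _ = P * ((m : ℝ) ^ d / (L * n)) := by field_simp
      _ = P * (L : ℝ) ^ (d - 1) / M := by
          rw [hnv]
          obtain ⟨e, rfl⟩ : ∃ e, d = e + 1 := ⟨d - 1, by omega⟩
          rw [Nat.add_sub_cancel, pow_succ (L : ℝ)]
          field_simp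

/-! ### Part 6: summing over scales -/

lemma geo_up (u : ℕ → ℝ) (hu0 : ∀ k, 0 ≤ u k) (hu : ∀ k, u k ≤ 3 / 4 * u (k + 1)) (B : ℝ)
    (hB : 0 ≤ B) (s : Finset ℕ) (hs : ∀ k ∈ s, u k ≤ B) : ∑ k ∈ s, u k ≤ 4 * B := by
  rcases s.eq_empty_or_nonempty with rfl | hne
  · simpa using hB
  have h1 : ∀ j, ∑ k ∈ range (j + 1), u k ≤ 4 * u j := by
    intro j
    induction j with
    | zero => simp; linarith [hu0 0]
    | succ j ih => rw [Finset.sum_range_succ]; linarith [hu j]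
  calc ∑ k ∈ s, u k ≤ ∑ k ∈ range (s.max' hne + 1), u k := by
        refine Finset.sum_le_sum_of_subset_of_nonneg ?_ (fun k _ _ => hu0 k)
        intro k hk
        rw [Finset.mem_range]
        exact Nat.lt_succ_of_le (Finset.le_max' s k hk)
    _ ≤ 4 * u (s.max' hne) := h1 _
    _ ≤ 4 * B := by linarith [hs _ (s.max'_mem hne)]

lemma geo_down (c : ℝ) (hc : 0 ≤ c) (B : ℝ) (hB : 0 ≤ B) (s : Finset ℕ)
    (hs : ∀ k ∈ s, c / 2 ^ k ≤ B) : ∑ k ∈ s, c / 2 ^ k ≤ 2 * B := by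
  rcases s.eq_empty_or_nonempty with rfl | hne
  · simpa using hB
  have h2 := hs _ (s.min'_mem hne)
  calc ∑ k ∈ s, c / 2 ^ k ≤ ∑ k ∈ Finset.Ico (s.min' hne) (s.max' hne + 1), c / 2 ^ k := by
        refine Finset.sum_le_sum_of_subset_of_nonneg ?_ (fun k _ _ => by positivity)
        intro k hk
        rw [Finset.mem_Ico]
        exact ⟨Finset.min'_le s k hk, Nat.lt_succ_of_le (Finset.le_max' s k hk)⟩
    _ = (c / 2 ^ (s.min' hne)) * ∑ i ∈ range (s.max' hne + 1 - s.min' hne), (1 / 2 : ℝ) ^ i := by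
        rw [Finset.sum_Ico_eq_sum_range, Finset.mul_sum]
        refine Finset.sum_congr rfl fun i _ => ?_
        rw [pow_add, one_div, inv_pow]
        field_simp
    _ ≤ (c / 2 ^ (s.min' hne)) * 2 := by
        refine mul_le_mul_of_nonneg_left (sum_geometric_two_le _) (by positivity)
    _ ≤ 2 * B := by linarith

lemma bad_scale (m d M : ℕ) (L s P : ℝ) (hm : 0 < m) (hd : 2 ≤ d) (hM : 0 < M)
    (hMθ : (6 / 5 : ℝ) ^ d ≤ 2 * M) (hL0 : 0 < L) (hLm : L ≤ m) (hs0 : 0 < s)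
    (hs : s ≤ (m : ℝ) ^ d / 2)
    (hiso : d * s * (Real.exp ((d * Real.log m - Real.log s) / d) - 1) ≤ m * P)
    (hbad : P * M < d ^ 2 * L ^ (d - 1)) : s / L ≤ 2 * 385 ^ 2 * (P / d) := by
  have hm' : (0 : ℝ) < m := by exact_mod_cast hm
  have hM' : (1 : ℝ) ≤ M := by exact_mod_cast hM
  have hd' : (0 : ℝ) < d := by exact_mod_cast (by omega : 0 < d)
  have hd2 : (2 : ℝ) ≤ d := by exact_mod_cast hd
  set τ := (d * Real.log m - Real.log s) / d with hτ
  have ht : d * τ = Real.log ((m : ℝ) ^ d / s) := by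
    rw [Real.log_div (by positivity) hs0.ne', Real.log_pow, hτ]; field_simp
  have hNs : 2 ≤ (m : ℝ) ^ d / s := by
    rw [le_div_iff₀ hs0]; linarith
  have hlog2 := Real.log_two_gt_d9
  have hlog2' := Real.log_two_lt_d9
  have ht1 : Real.log 2 ≤ d * τ := by
    rw [ht]; exact Real.log_le_log (by norm_num) hNs
  have hτe : τ ≤ Real.exp τ - 1 := by linarith [Real.add_one_le_exp τ]
  have hsmP : s / 2 ≤ m * P := by
    refine le_trans ?_ hiso
    have : d * s * τ ≤ d * s * (Real.exp τ - 1) := by gcongr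
    nlinarith
  have hP : 0 < P := by
    by_contra h
    push Not at h
    nlinarith
  obtain ⟨e, rfl⟩ : ∃ e, d = e + 1 := ⟨d - 1, by omega⟩
  have he : 1 ≤ e := by omega
  rw [Nat.add_sub_cancel] at hbad
  set D : ℝ := ((e + 1 : ℕ) : ℝ) with hD
  have hτ1 : 1 / 384 ≤ τ := by
    have h1 : (6 / 5 : ℝ) ^ (e + 1) / (4 * D ^ 2) ≤ (m : ℝ) ^ (e + 1) / s := by
      rw [div_le_div_iff₀ (by positivity) hs0]
      have h2 : L ^ e ≤ (m : ℝ) ^ e := by gcongr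
      have h3 : P * M ≤ D ^ 2 * (m : ℝ) ^ e := by nlinarith [sq_nonneg D]
      have h4 : m * (P * M) ≤ m * (D ^ 2 * (m : ℝ) ^ e) := by gcongr
      have h5 : (6 / 5 : ℝ) ^ (e + 1) * s ≤ 2 * M * s := by gcongr
      have h6 : s / 2 * M ≤ m * P * M := by gcongr
      rw [pow_succ (m : ℝ)]
      nlinarith
    have h2 := Real.log_le_log (by positivity) h1
    rw [← ht, Real.log_div (by positivity) (by positivity), Real.log_pow,
      Real.log_mul (by norm_num) (by positivity), Real.log_pow] at h2
    have h3 : (1 : ℝ) / 6 ≤ Real.log (6 / 5) := by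
      have := Real.one_sub_inv_le_log_of_pos (show (0 : ℝ) < 6 / 5 by norm_num)
      norm_num at this ⊢; linarith
    have h4 : Real.log D ≤ D / 24 + 5 * Real.log 2 - 1 := by
      have h5 := Real.log_le_sub_one_of_pos (show 0 < D / 24 by positivity)
      rw [Real.log_div hd'.ne' (by norm_num)] at h5
      have h6 : Real.log 24 ≤ Real.log (2 ^ 5) := Real.log_le_log (by norm_num) (by norm_num)
      rw [Real.log_pow] at h6
      push_cast at h6
      linarith
    have h5 : Real.log 4 = 2 * Real.log 2 := by
      rw [show (4 : ℝ) = 2 ^ 2 by norm_num, Real.log_pow]; norm_num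
    have h6 : D / 12 - 8 ≤ D * τ := by
      rw [← hD] at h2
      push_cast at h2
      nlinarith
    have h7 : D * (1 / 384) ≤ D * τ := by
      rcases le_total D 192 with h | h <;> linarith
    exact le_of_mul_le_mul_left h7 hd'
  have h8 : Real.exp τ / 385 ≤ Real.exp τ - 1 := by linarith
  have h9 : D * s / 385 * Real.exp τ ≤ m * P := by
    refine le_trans ?_ hiso
    have := mul_le_mul_of_nonneg_left h8 (show 0 ≤ D * s by positivity)
    linarith
  have h10 : (D * s / 385) ^ (e + 1) * ((m : ℝ) ^ (e + 1) / s) ≤ (m : ℝ) ^ (e + 1) * P ^ (e + 1) := by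
    have := pow_le_pow_left₀ (by positivity) h9 (e + 1)
    rw [mul_pow, mul_pow (m : ℝ), ← Real.exp_nat_mul, ← hD, ht, Real.exp_log (by positivity)] at this
    exact this
  have h11 : (D * s / 385) ^ (e + 1) ≤ P ^ (e + 1) * s := by
    have hmp : (0 : ℝ) < (m : ℝ) ^ (e + 1) := by positivity
    have e1 : (D * s / 385) ^ (e + 1) * ((m : ℝ) ^ (e + 1) / s) =
      (m : ℝ) ^ (e + 1) * ((D * s / 385) ^ (e + 1) / s) := by ring
    rw [e1] at h10
    have := le_of_mul_le_mul_left h10 hmp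
    rwa [div_le_iff₀ hs0] at this
  have h12 : P ^ (e + 1) ≤ P ^ e * (D ^ 2 * L ^ e) := by
    rw [pow_succ]
    gcongr
    nlinarith
  have hDe : D ≤ 2 ^ e := by
    have : e + 1 ≤ 2 ^ e := Nat.lt_two_pow_self
    rw [hD]
    exact_mod_cast this
  have h13 : (D * s / 385) ^ e / 385 ≤ 2 ^ e * (P * L) ^ e := by
    have h14 : (D * s / 385) ^ (e + 1) ≤ P ^ e * (D ^ 2 * L ^ e) * s :=
      h11.trans (by gcongr)
    have h15 : (D * s) * ((D * s / 385) ^ e / 385) ≤ (D * s) * (D * (P * L) ^ e) := by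
      rw [mul_pow P]
      rw [pow_succ] at h14
      nlinarith
    have h16 := le_of_mul_le_mul_left h15 (by positivity)
    refine h16.trans ?_
    gcongr
  have h17 : (D * s / 385 / 385) ^ e ≤ (2 * (P * L)) ^ e := by
    rw [mul_pow, div_pow _ (385 : ℝ)]
    refine le_trans ?_ h13
    gcongr
    exact le_self_pow₀ (by norm_num) (by omega)
  have h18 := (pow_le_pow_iff_left₀ (by positivity) (by positivity) (by omega)).1 h17
  rw [div_le_iff₀ hL0]
  have e2 : 2 * 385 ^ 2 * (P / D) * L = 2 * (P * L) * (385 * 385) / D := by ring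
  rw [e2, le_div_iff₀ hd']
  have e3 : D * s / 385 / 385 = D * s / (385 * 385) := by ring
  rw [e3, div_le_iff₀ (by norm_num)] at h18
  linarith

def KK : ℝ := 8 * 385 ^ 2 + 4

lemma sum_scales (κ m d M : ℕ) (s P : ℝ) (hm : m = 2 ^ κ) (hd : 2 ≤ d) (hM : 0 < M)
    (hMθ : (6 / 5 : ℝ) ^ d ≤ 2 * M) (hs0 : 0 ≤ s) (hP : 0 ≤ P)
    (hs : s ≤ (m : ℝ) ^ d / 2)
    (hiso : d * s * (Real.exp ((d * Real.log m - Real.log s) / d) - 1) ≤ m * P) :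
    ∑ k ∈ range κ, min (2 * s / (2 : ℝ) ^ (k + 1))
      (√(P * ((2 : ℝ) ^ (k + 1)) ^ (d - 1) / M)) ≤ KK * (P / d) := by
  have hM' : (0 : ℝ) < M := by exact_mod_cast hM
  have hd' : (0 : ℝ) < d := by exact_mod_cast (by omega : 0 < d)
  set u : ℕ → ℝ := fun k => √(P * ((2 : ℝ) ^ (k + 1)) ^ (d - 1) / M) with hu
  have hB : 0 ≤ P / d := by positivity
  rcases hs0.eq_or_lt with h | hs0'
  · rw [← h]
    have h1 : ∑ k ∈ range κ, min (2 * (0 : ℝ) / (2 : ℝ) ^ (k + 1)) (u k) ≤ 0 := by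
      refine Finset.sum_nonpos fun k _ => ?_
      refine (min_le_left _ _).trans ?_
      simp
    refine h1.trans ?_
    unfold KK
    positivity
  have hmp : 0 < m := by rw [hm]; positivity
  rw [← Finset.sum_filter_add_sum_filter_not (range κ)
    (fun k => P * M < d ^ 2 * ((2 : ℝ) ^ (k + 1)) ^ (d - 1))]
  have hbad : ∑ k ∈ range κ with P * M < d ^ 2 * ((2 : ℝ) ^ (k + 1)) ^ (d - 1),
      min (2 * s / (2 : ℝ) ^ (k + 1)) (u k) ≤ 2 * (2 * (2 * 385 ^ 2 * (P / d))) := by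
    have h1 : ∀ k ∈ {k ∈ range κ | P * M < d ^ 2 * ((2 : ℝ) ^ (k + 1)) ^ (d - 1)},
        s / 2 ^ k ≤ 2 * (2 * 385 ^ 2 * (P / d)) := by
      intro k hk
      simp only [Finset.mem_filter, Finset.mem_range] at hk
      have h2 := bad_scale m d M ((2 : ℝ) ^ (k + 1)) s P hmp hd hM hMθ (by positivity) ?_ hs0' hs
        hiso hk.2
      · rw [pow_succ] at h2
        have e : s / 2 ^ k = 2 * (s / (2 ^ k * 2)) := by field_simp
        rw [e]
        linarith
      · rw [hm]
        push_cast
        exact pow_le_pow_right₀ (by norm_num) (by omega)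
    refine le_trans ?_ (geo_down s hs0 _ (by positivity) _ h1)
    refine Finset.sum_le_sum fun k _ => ?_
    refine (min_le_left _ _).trans (le_of_eq ?_)
    rw [pow_succ]
    field_simp
  have hgood : ∑ k ∈ range κ with ¬ P * M < d ^ 2 * ((2 : ℝ) ^ (k + 1)) ^ (d - 1),
      min (2 * s / (2 : ℝ) ^ (k + 1)) (u k) ≤ 4 * (P / d) := by
    refine le_trans (Finset.sum_le_sum fun k _ => min_le_right _ _) ?_
    refine geo_up u (fun k => Real.sqrt_nonneg _) ?_ _ hB _ ?_
    · intro k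
      simp only [hu]
      rw [show (3 / 4 : ℝ) = √(9 / 16) by
        rw [show (9 / 16 : ℝ) = (3 / 4) ^ 2 by norm_num, Real.sqrt_sq (by norm_num)],
        ← Real.sqrt_mul (by norm_num)]
      refine Real.sqrt_le_sqrt ?_
      have h3 : ((2 : ℝ) ^ (k + 1 + 1)) ^ (d - 1) = ((2 : ℝ) ^ (k + 1)) ^ (d - 1) * 2 ^ (d - 1) := by
        rw [pow_succ _ (k + 1), mul_pow]
      have h4 : (2 : ℝ) ≤ 2 ^ (d - 1) := le_self_pow₀ (by norm_num) (by omega)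
      rw [h3]
      have h5 : 0 ≤ P * ((2 : ℝ) ^ (k + 1)) ^ (d - 1) / M := by positivity
      have e : 9 / 16 * (P * (((2 : ℝ) ^ (k + 1)) ^ (d - 1) * 2 ^ (d - 1)) / M) =
        (P * ((2 : ℝ) ^ (k + 1)) ^ (d - 1) / M) * (9 / 16 * 2 ^ (d - 1)) := by ring
      rw [e]
      nlinarith
    · intro k hk
      simp only [Finset.mem_filter, Finset.mem_range, not_lt] at hk
      have h6 := hk.2
      simp only [hu]
      rw [Real.sqrt_le_left hB, div_pow, div_le_div_iff₀ hM' (by positivity)]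
      have := mul_le_mul_of_nonneg_left h6 hP
      linarith
  have : KK * (P / d) = 2 * (2 * (2 * 385 ^ 2 * (P / d))) + 4 * (P / d) := by unfold KK; ring
  rw [this]
  exact add_le_add hbad hgood

/-! ### Part 7: coarea and the Sobolev inequality -/

def stp (c s : ℝ) : ℝ := if s < c then 1 else 0

lemma stp_integrable (c a b : ℝ) : IntervalIntegrable (stp c) volume a b := by
  refine Antitone.intervalIntegrable ?_
  intro s t hst
  unfold stp
  split_ifs <;> linarith

lemma stp_integral (c A : ℝ) (h1 : -A ≤ c) (h2 : c ≤ A) : ∫ s in (-A)..A, stp c s = c + A := by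
  rw [← intervalIntegral.integral_add_adjacent_intervals (stp_integrable c (-A) c)
    (stp_integrable c c A)]
  have e1 : ∫ s in (-A)..c, stp c s = ∫ s in (-A)..c, (1 : ℝ) := by
    refine intervalIntegral.integral_congr_ae ?_
    have : ∀ᵐ s : ℝ, s ≠ c := by
      simp [ae_iff]
    filter_upwards [this] with s hs hsI
    rw [Set.uIoc_of_le h1] at hsI
    have : s < c := lt_of_le_of_ne hsI.2 hs
    simp [stp, this]
  have e2 : ∫ s in c..A, stp c s = ∫ s in c..A, (0 : ℝ) := by
    refine intervalIntegral.integral_congr ?_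
    intro s hs
    rw [Set.uIcc_of_le h2] at hs
    simp [stp, not_lt.2 hs.1]
  rw [e1, e2]
  simp

lemma stp_abs (a b s : ℝ) : |stp a s - stp b s| = stp (max a b) s - stp (min a b) s := by
  rcases le_total a b with h | h
  · rw [max_eq_right h, min_eq_left h, abs_sub_comm, abs_of_nonneg]
    unfold stp; split_ifs <;> linarith
  · rw [max_eq_left h, min_eq_right h, abs_of_nonneg]
    unfold stp; split_ifs <;> linarith

lemma ii_sum {I : Type*} [Fintype I] (g : I → ℝ → ℝ) (a b : ℝ)
    (h : ∀ i, IntervalIntegrable (g i) volume a b) :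
    IntervalIntegrable (fun s => ∑ i, g i s) volume a b := by
  have h1 := IntervalIntegrable.sum (μ := volume) (a := a) (b := b) Finset.univ
    (f := g) (fun i _ => h i)
  have e : (fun s => ∑ i, g i s) = ∑ i, g i := by
    funext s; simp
  rw [e]
  exact h1

lemma coarea {X A E : Type*} [Fintype X] [DecidableEq X] [Fintype A] [Fintype E]
    (α : A → ℝ) (hα : ∀ a, 0 ≤ α a) (v : A → X → ℝ) (hv : ∀ a, ∑ x, v a x = 0)
    (β : E → ℝ) (p q : E → X)
    (hS : ∀ S : Finset X, ∑ a, α a * |∑ x, ind S x * v a x| ≤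
      ∑ e, β e * |ind S (p e) - ind S (q e)|) (f : X → ℝ) :
    ∑ a, α a * |∑ x, f x * v a x| ≤ ∑ e, β e * |f (p e) - f (q e)| := by
  set R : ℝ := ∑ x, |f x| with hR
  have hfR : ∀ x, |f x| ≤ R := fun x =>
    Finset.single_le_sum (f := fun x => |f x|) (fun _ _ => abs_nonneg _) (Finset.mem_univ x)
  have hR0 : 0 ≤ R := Finset.sum_nonneg fun _ _ => abs_nonneg _
  have hR1 : -R ≤ R := by linarith
  have hintegr : ∀ c, |c| ≤ R → ∫ s in (-R)..R, stp c s = c + R := fun c hc =>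
    stp_integral c R (abs_le.1 hc).1 (abs_le.1 hc).2
  have hlev : ∀ s x, ind {x | s < f x} x = stp (f x) s := by
    intro s x; simp [ind, stp]
  have i1 : ∀ a, IntervalIntegrable (fun s => ∑ x, stp (f x) s * v a x) volume (-R) R := by
    intro a
    exact ii_sum _ _ _ fun x => (stp_integrable (f x) (-R) R).mul_const (v a x)
  have i2 : ∀ e, IntervalIntegrable (fun s => |stp (f (p e)) s - stp (f (q e)) s|) volume (-R) R :=
    fun e => ((stp_integrable _ _ _).sub (stp_integrable _ _ _)).abs
  have key : ∀ a, |∑ x, f x * v a x| ≤ ∫ s in (-R)..R, |∑ x, stp (f x) s * v a x| := by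
    intro a
    have e1 : ∑ x, f x * v a x = ∫ s in (-R)..R, ∑ x, stp (f x) s * v a x := by
      rw [intervalIntegral.integral_finsetSum
        (fun x _ => (stp_integrable (f x) (-R) R).mul_const (v a x))]
      simp only [intervalIntegral.integral_mul_const, hintegr _ (hfR _), add_mul,
        Finset.sum_add_distrib, ← Finset.mul_sum, hv, mul_zero, add_zero]
    rw [e1]
    exact intervalIntegral.abs_integral_le_integral_abs hR1
  have key2 : ∀ e, ∫ s in (-R)..R, |stp (f (p e)) s - stp (f (q e)) s| = |f (p e) - f (q e)| := by
    intro e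
    simp only [stp_abs]
    rw [intervalIntegral.integral_sub (stp_integrable _ _ _) (stp_integrable _ _ _),
      hintegr _ (by rcases max_choice (f (p e)) (f (q e)) with h | h <;> rw [h] <;> exact hfR _),
      hintegr _ (by rcases min_choice (f (p e)) (f (q e)) with h | h <;> rw [h] <;> exact hfR _)]
    rw [add_sub_add_right_eq_sub, max_sub_min_eq_abs, abs_sub_comm]
  calc ∑ a, α a * |∑ x, f x * v a x|
      ≤ ∑ a, α a * ∫ s in (-R)..R, |∑ x, stp (f x) s * v a x| :=
        Finset.sum_le_sum fun a _ => mul_le_mul_of_nonneg_left (key a) (hα a)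
    _ = ∫ s in (-R)..R, ∑ a, α a * |∑ x, stp (f x) s * v a x| := by
        rw [intervalIntegral.integral_finsetSum (fun a _ => ((i1 a).abs).const_mul (α a))]
        simp only [intervalIntegral.integral_const_mul]
    _ ≤ ∫ s in (-R)..R, ∑ e, β e * |stp (f (p e)) s - stp (f (q e)) s| := by
        refine intervalIntegral.integral_mono_on hR1 ?_ ?_ ?_
        · exact ii_sum _ _ _ fun a => ((i1 a).abs).const_mul (α a)
        · exact ii_sum _ _ _ fun e => (i2 e).const_mul (β e)
        · intro s _
          have := hS {x | s < f x}
          simpa only [hlev] using this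
    _ = ∑ e, β e * |f (p e) - f (q e)| := by
        rw [intervalIntegral.integral_finsetSum (fun e _ => (i2 e).const_mul (β e))]
        simp only [intervalIntegral.integral_const_mul, key2]

/-- The Sobolev-type inequality for indicator functions of sets. -/
lemma set_sobolev (κ d M : ℕ) (hd : 2 ≤ d) (hM : 0 < M) (hMθ : (6 / 5 : ℝ) ^ d ≤ 2 * M)
    (S : Finset (GPt (2 ^ κ) d)) :
    ∑ k : Fin κ, ((2 : ℝ) ^ (k + 1 : ℕ))⁻¹ *
      av (fun ω : Fin (M * (2 ^ (κ - (k + 1))) ^ d) → GPt (2 ^ κ) d × GPt (2 ^ (k + 1 : ℕ)) d =>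
        |∑ z, ind S z * muv (pow_dvd_pow 2 k.2) ω z|)
      ≤ KK / (d * ((2 : ℝ) ^ κ) ^ d) * ∑ i, PE i (ind S) := by
  wlog hS : (#S : ℝ) ≤ ((2 : ℝ) ^ κ) ^ d / 2 generalizing S with H
  · have hc : (#Sᶜ : ℝ) ≤ ((2 : ℝ) ^ κ) ^ d / 2 := by
      have h1 := Finset.card_add_card_compl S
      have h2 : Fintype.card (GPt (2 ^ κ) d) = (2 ^ κ) ^ d := by simp
      rw [h2] at h1
      have h3 : (#S : ℝ) + #Sᶜ = ((2 : ℝ) ^ κ) ^ d := by exact_mod_cast h1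
      linarith
    have h4 := H Sᶜ hc
    have h5 : ∀ x, ind Sᶜ x = 1 - ind S x := by
      intro x
      by_cases hx : x ∈ S <;> simp [ind, hx]
    have h6 : ∀ i, PE i (ind Sᶜ) = PE i (ind S) := by
      intro i
      simp only [PE, h5]
      refine Finset.sum_congr rfl fun x _ => ?_
      rw [abs_sub_comm]
      congr 1
      ring
    simp only [h6] at h4
    refine le_trans (le_of_eq ?_) h4
    refine Finset.sum_congr rfl fun k _ => ?_
    congr 2
    funext ω
    simp only [h5, sub_mul, one_mul, Finset.sum_sub_distrib, sum_muv, zero_sub, abs_neg]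
  have hN : (0 : ℝ) < ((2 : ℝ) ^ κ) ^ d := by positivity
  have hd' : (0 : ℝ) < d := by exact_mod_cast (by omega : 0 < d)
  set P := ∑ i, PE i (ind S) with hP
  have hP0 : 0 ≤ P := Finset.sum_nonneg fun i _ => Finset.sum_nonneg fun x _ => abs_nonneg _
  have hmain := sum_scales κ (2 ^ κ) d M (#S) P rfl hd hM hMθ (by positivity) hP0
    (by push_cast; exact hS) (isoper (by omega) (by positivity) S)
  rw [← Fin.sum_univ_eq_sum_range (fun k => min (2 * (#S : ℝ) / (2 : ℝ) ^ (k + 1))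
      (√(P * ((2 : ℝ) ^ (k + 1)) ^ (d - 1) / M)))] at hmain
  have e : KK / (d * ((2 : ℝ) ^ κ) ^ d) * P = (KK * (P / d)) / ((2 : ℝ) ^ κ) ^ d := by
    field_simp
  rw [e, le_div_iff₀ hN, mul_comm, Finset.mul_sum]
  refine le_trans (Finset.sum_le_sum fun k _ => ?_) hmain
  have h1 := set_scale (m := 2 ^ κ) (L := 2 ^ (k + 1 : ℕ)) (n := M * (2 ^ (κ - (k + 1))) ^ d) (M := M)
    (by positivity) (by positivity) (by omega) hM (pow_dvd_pow 2 k.2) ?_ S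
  · push_cast at h1
    rw [div_eq_mul_inv, mul_assoc] at h1
    exact h1
  · push_cast
    rw [mul_assoc, ← mul_pow, ← pow_add]
    congr 3
    have := k.2
    omega

/-! ### Part 8: lower bound on the transportation cost -/

lemma geom_exp (l : ℝ) (hl : 0 < l) (n : ℕ) :
    ∑ j ∈ range n, Real.exp (-l * (j + 1)) ≤ 1 / l := by
  have h : ∀ n : ℕ, ∑ j ∈ range n, Real.exp (-l * (j + 1)) ≤ 1 / l * (1 - Real.exp (-l * n)) := by
    intro n
    induction n with
    | zero => simp
    | succ n ih =>
      rw [Finset.sum_range_succ]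
      push_cast
      have h1 : Real.exp (-l * n) = Real.exp (-l * (n + 1)) * Real.exp l := by
        rw [← Real.exp_add]; congr 1; ring
      have h2 := Real.add_one_le_exp l
      have h3 := Real.exp_pos (-l * (n + 1))
      have h4 : Real.exp (-l * (n + 1)) ≤
          1 / l * (Real.exp (-l * n) - Real.exp (-l * (n + 1))) := by
        rw [one_div, ← div_eq_inv_mul, le_div_iff₀ hl, h1]
        nlinarith
      have e : 1 / l * (1 - Real.exp (-l * (n + 1))) = 1 / l * (1 - Real.exp (-l * n)) +
        1 / l * (Real.exp (-l * n) - Real.exp (-l * (n + 1))) := by ring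
      rw [e]
      exact add_le_add ih h4
  refine (h n).trans ?_
  have h1 := Real.exp_pos (-l * n)
  have h2 : 0 < 1 / l := by positivity
  nlinarith

lemma oned_nat (l : ℝ) (hl : 0 < l) (a k : ℕ) :
    ∑ b ∈ range (a + 1 + k), Real.exp (-l * |(a : ℝ) - (b : ℝ)|) ≤ 1 + 2 / l := by
  rw [Finset.sum_range_add, Finset.sum_range_succ, ← Finset.sum_range_reflect]
  have e1 : ∑ j ∈ range a, Real.exp (-l * |(a : ℝ) - ((a - 1 - j : ℕ) : ℝ)|) =
      ∑ j ∈ range a, Real.exp (-l * (j + 1)) := by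
    refine Finset.sum_congr rfl fun j hj => ?_
    rw [Finset.mem_range] at hj
    have : ((a - 1 - j : ℕ) : ℝ) = (a : ℝ) - 1 - (j : ℝ) := by
      rw [Nat.cast_sub (by omega), Nat.cast_sub (by omega)]; simp
    rw [this]
    congr 2
    rw [abs_of_nonneg] <;> [ring; skip]
    have : (0 : ℝ) ≤ j := by positivity
    linarith
  have e2 : ∀ k, ∑ j ∈ range k, Real.exp (-l * |(a : ℝ) - ((a + 1 + j : ℕ) : ℝ)|) =
      ∑ j ∈ range k, Real.exp (-l * (j + 1)) := by
    intro k
    refine Finset.sum_congr rfl fun j _ => ?_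
    push_cast
    congr 2
    rw [abs_of_nonpos] <;> [ring; skip]
    have : (0 : ℝ) ≤ j := by positivity
    linarith
  rw [e1, e2]
  have h1 := geom_exp l hl a
  have h2 := geom_exp l hl k
  have e : 2 / l = 1 / l + 1 / l := by ring
  rw [e]
  simp only [sub_self, abs_zero, mul_zero, Real.exp_zero]
  linarith

lemma oned {m : ℕ} (l : ℝ) (hl : 0 < l) (a : Fin m) :
    ∑ b : Fin m, Real.exp (-l * |((a : ℕ) : ℝ) - ((b : ℕ) : ℝ)|) ≤ 1 + 2 / l := by
  rw [Fin.sum_univ_eq_sum_range (fun b : ℕ => Real.exp (-l * |((a : ℕ) : ℝ) - (b : ℝ)|)) m]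
  have h := oned_nat l hl a (m - 1 - a)
  have hm : (a : ℕ) + 1 + (m - 1 - a) = m := by have := a.2; omega
  rwa [hm] at h

lemma multi {m d K : ℕ} (l : ℝ) (hl : 0 < l) (x : GPt m d) (φ : Fin m → Fin K → Fin m)
    (hφ : ∀ a, Function.Injective (φ a)) :
    ∑ o : GPt K d, Real.exp (-l * gdistM x (fun i => φ (x i) (o i))) ≤ (1 + 2 / l) ^ d := by
  have e : ∀ o : GPt K d, Real.exp (-l * gdistM x (fun i => φ (x i) (o i))) =
      ∏ i, Real.exp (-l * |((x i : ℕ) : ℝ) - ((φ (x i) (o i) : ℕ) : ℝ)|) := by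
    intro o
    rw [gdistM, Finset.mul_sum, Real.exp_sum]
  simp only [e]
  rw [← Fintype.prod_sum (f := fun (i : Fin d) (o : Fin K) =>
    Real.exp (-l * |((x i : ℕ) : ℝ) - ((φ (x i) o : ℕ) : ℝ)|))]
  calc _ ≤ ∏ _i : Fin d, (1 + 2 / l) := by
        refine Finset.prod_le_prod (fun i _ => Finset.sum_nonneg fun _ _ => (Real.exp_pos _).le) ?_
        intro i _
        refine le_trans ?_ (oned l hl (x i))
        rw [← Finset.sum_image (s := Finset.univ) (g := φ (x i))
          (f := fun b : Fin m => Real.exp (-l * |((x i : ℕ) : ℝ) - ((b : ℕ) : ℝ)|))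
          (fun a _ b _ h => hφ (x i) h)]
        exact Finset.sum_le_sum_of_subset_of_nonneg (Finset.subset_univ _)
          (fun _ _ _ => (Real.exp_pos _).le)
    _ = _ := by simp

lemma gdistM_self {m d : ℕ} (u : GPt m d) : gdistM u u = 0 := by simp [gdistM]

lemma gdistM_nonneg {m d : ℕ} (u v : GPt m d) : 0 ≤ gdistM u v :=
  Finset.sum_nonneg fun _ _ => abs_nonneg _

lemma gdistM_comm {m d : ℕ} (u v : GPt m d) : gdistM u v = gdistM v u := by
  simp only [gdistM, abs_sub_comm]

lemma gdistM_tri {m d : ℕ} (u v w : GPt m d) : gdistM u w ≤ gdistM u v + gdistM v w := by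
  simp only [gdistM, ← Finset.sum_add_distrib]
  exact Finset.sum_le_sum fun i _ => abs_sub_le _ _ _

lemma tc_pointwise {m m0 d L n : ℕ} (hd : L ∣ m) (hn : 0 < n) (ι : GPt m d → GPt m0 d)
    (hι : ∀ u v, gdistM (ι u) (ι v) = gdistM u v) (l t0 : ℝ) (hl : 0 < l)
    (ω : Fin n → GPt m d × GPt L d) :
    1 / l * (t0 + 1 - Real.exp t0 *
      ((∑ j, ∑ j', Real.exp (-l * gdistM (ω j).1 (yy hd (ω j')))) / n)) ≤
      tcNormG m0 d (pushM ι (muv hd ω)) := by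
  have : Nonempty (Fin n) := ⟨⟨0, hn⟩⟩
  have hn' : (0 : ℝ) < n := by exact_mod_cast hn
  have hne : (Finset.univ : Finset (Fin n)).Nonempty := Finset.univ_nonempty
  let f : GPt m0 d → ℝ := fun u => Finset.univ.inf' hne (fun j => gdistM u (ι (yy hd (ω j))))
  have hf1 : ∀ u v, f u ≤ f v + gdistM u v := by
    intro u v
    obtain ⟨j, _, hj⟩ := Finset.exists_mem_eq_inf' hne (fun j => gdistM v (ι (yy hd (ω j))))
    have h1 : f u ≤ gdistM u (ι (yy hd (ω j))) := Finset.inf'_le _ (Finset.mem_univ j)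
    have h2 : f v = gdistM v (ι (yy hd (ω j))) := hj
    rw [h2]
    linarith [gdistM_tri u v (ι (yy hd (ω j)))]
  have hf : ∀ u v, |f u - f v| ≤ gdistM u v := by
    intro u v
    rw [abs_le]
    constructor
    · linarith [hf1 v u, gdistM_comm u v]
    · linarith [hf1 u v]
  have hf0 : ∀ u, 0 ≤ f u := by
    intro u
    obtain ⟨j, _, hj⟩ := Finset.exists_mem_eq_inf' hne (fun j => gdistM u (ι (yy hd (ω j))))
    have h2 : f u = gdistM u (ι (yy hd (ω j))) := hj
    rw [h2]
    exact gdistM_nonneg _ _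
  have hfy : ∀ j, f (ι (yy hd (ω j))) = 0 := by
    intro j
    refine le_antisymm ?_ (hf0 _)
    have h1 : f (ι (yy hd (ω j))) ≤ gdistM (ι (yy hd (ω j))) (ι (yy hd (ω j))) :=
      Finset.inf'_le _ (Finset.mem_univ j)
    rwa [gdistM_self] at h1
  have hlb := le_tc ι (muv hd ω) (sum_muv hd ω) f hf
  rw [sum_mul_muv hd ω (fun z => f (ι z))] at hlb
  simp only [hfy, sub_zero] at hlb
  refine le_trans ?_ ((le_abs_self _).trans hlb)
  have key : ∀ j, 1 / l * (t0 + 1 - Real.exp t0 *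
      ∑ j', Real.exp (-l * gdistM (ω j).1 (yy hd (ω j')))) ≤ f (ι (ω j).1) := by
    intro j
    obtain ⟨j', _, hj'⟩ :=
      Finset.exists_mem_eq_inf' hne (fun j' => gdistM (ι (ω j).1) (ι (yy hd (ω j'))))
    have h2 : f (ι (ω j).1) = gdistM (ω j).1 (yy hd (ω j')) := by rw [← hι]; exact hj'
    have h3 : Real.exp (-l * f (ι (ω j).1)) ≤
        ∑ j', Real.exp (-l * gdistM (ω j).1 (yy hd (ω j'))) := by
      rw [h2]
      exact Finset.single_le_sum (f := fun j' => Real.exp (-l * gdistM (ω j).1 (yy hd (ω j'))))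
        (fun _ _ => (Real.exp_pos _).le) (Finset.mem_univ j')
    have h4 := Real.add_one_le_exp (t0 + -l * f (ι (ω j).1))
    rw [Real.exp_add] at h4
    have h5 := mul_le_mul_of_nonneg_left h3 (Real.exp_pos t0).le
    rw [one_div, ← div_eq_inv_mul, div_le_iff₀ hl]
    linarith
  have h6 := Finset.sum_le_sum fun j (_ : j ∈ Finset.univ) => key j
  rw [le_div_iff₀ hn']
  refine le_trans (le_of_eq ?_) h6
  rw [← Finset.mul_sum, Finset.sum_sub_distrib, ← Finset.mul_sum]
  simp only [Finset.sum_const, Finset.card_univ, Fintype.card_fin, nsmul_eq_mul]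
  field_simp

lemma tc_lower {m m0 d L n M : ℕ} (hm : 0 < m) (hL : 2 ≤ L) (hd2 : 2 ≤ d) (hM : 0 < M)
    (hMθ : (M : ℝ) ≤ (6 / 5) ^ d) (hd : L ∣ m)
    (hn : (n : ℝ) * (L : ℝ) ^ d = M * (m : ℝ) ^ d) (ι : GPt m d → GPt m0 d)
    (hι : ∀ u v, gdistM (ι u) (ι v) = gdistM u v) :
    (d : ℝ) * L / 640 ≤ av (fun ω : Fin n → GPt m d × GPt L d =>
      tcNormG m0 d (pushM ι (muv hd ω))) := by
  have : NeZero m := ⟨hm.ne'⟩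
  have : NeZero L := ⟨by omega⟩
  have hm' : (0 : ℝ) < m := by exact_mod_cast hm
  have hL2 : (2 : ℝ) ≤ L := by exact_mod_cast hL
  have hL' : (0 : ℝ) < L := by linarith
  have hM' : (1 : ℝ) ≤ M := by exact_mod_cast hM
  have hLd : (0 : ℝ) < (L : ℝ) ^ d := by positivity
  have hmd : (0 : ℝ) < (m : ℝ) ^ d := by positivity
  have hn0 : (0 : ℝ) < n := by
    have h1 : (0 : ℝ) < n * (L : ℝ) ^ d := by rw [hn]; positivity
    exact pos_of_mul_pos_left h1 hLd.le
  have hn0' : 0 < n := by exact_mod_cast hn0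
  set l : ℝ := 40 / L with hl
  have hl0 : 0 < l := by positivity
  set t0 : ℝ := d / 16 with ht0
  set Z : ℝ := (1 + 2 / l) ^ d with hZ
  have hZ0 : 0 ≤ Z := by positivity
  let g : GPt m d × GPt L d → GPt m d × GPt L d → ℝ :=
    fun t t' => Real.exp (-l * gdistM t.1 (yy hd t'))
  have hdiag : av (fun t => g t t) ≤ Z / (L : ℝ) ^ d := by
    have e := av_prod (fun (x : GPt m d) (o : GPt L d) => Real.exp (-l * gdistM x (yy hd (x, o))))
    have e' : av (fun t => g t t) = av (fun x : GPt m d => av (fun o : GPt L d =>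
      Real.exp (-l * gdistM x (yy hd (x, o))))) := e
    rw [e']
    refine (av_mono (g := fun _ => Z / (L : ℝ) ^ d) fun x => ?_).trans (av_const _).le
    have h1 := multi l hl0 x (bl hd) (by
      intro a o o' h
      have := congrArg (rm hd) h
      simpa [rm_bl] using this)
    simp only [av]
    have h2 : (Fintype.card (GPt L d) : ℝ) = (L : ℝ) ^ d := by simp
    rw [h2]
    exact div_le_div_of_nonneg_right h1 hLd.le
  have hoff : av (fun t => av (fun t' => g t t')) ≤ Z / (m : ℝ) ^ d := by
    refine (av_mono (g := fun _ => Z / (m : ℝ) ^ d) fun t => ?_).trans (av_const _).le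
    simp only [av, card_T, g]
    rw [sum_yy hd (fun y => Real.exp (-l * gdistM t.1 y))]
    have h1 := multi l hl0 t.1 (fun _ o => o) (by intro a o o' h; exact h)
    rw [div_le_div_iff₀ (by positivity) hmd]
    have h2 := mul_le_mul_of_nonneg_left h1 (show 0 ≤ (L : ℝ) ^ d * (m : ℝ) ^ d by positivity)
    rw [← hZ] at h2
    linarith
  have hbound : av (fun ω : Fin n → GPt m d × GPt L d => ∑ j, ∑ j', g (ω j) (ω j')) ≤
      n * ((1 + M) * (Z / (L : ℝ) ^ d)) := by
    rw [av_sum]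
    simp only [av_sum]
    have h1 : ∀ j : Fin n, ∑ j', av (fun ω : Fin n → GPt m d × GPt L d => g (ω j) (ω j')) ≤
        (1 + M) * (Z / (L : ℝ) ^ d) := by
      intro j
      have h2 : ∀ j', av (fun ω : Fin n → GPt m d × GPt L d => g (ω j) (ω j')) ≤
          (if j' = j then Z / (L : ℝ) ^ d else 0) + Z / (m : ℝ) ^ d := by
        intro j'
        split_ifs with h
        · subst h
          rw [av_coord j' (fun t => g t t)]
          have : 0 ≤ Z / (m : ℝ) ^ d := by positivity
          linarith
        · rw [av_coord2 h g, zero_add]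
          exact hoff
      refine (Finset.sum_le_sum fun j' _ => h2 j').trans (le_of_eq ?_)
      rw [Finset.sum_add_distrib]
      simp only [Finset.sum_ite_eq', Finset.mem_univ, if_true, Finset.sum_const, Finset.card_univ,
        Fintype.card_fin, nsmul_eq_mul]
      have h3 : (n : ℝ) * (Z / (m : ℝ) ^ d) = M * (Z / (L : ℝ) ^ d) := by
        field_simp
        linear_combination Z * hn
      rw [h3]
      ring
    refine (Finset.sum_le_sum fun j _ => h1 j).trans (le_of_eq ?_)
    simp
  have hpt := av_mono fun ω : Fin n → GPt m d × GPt L d =>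
    tc_pointwise hd hn0' ι hι l t0 hl0 ω
  refine le_trans ?_ hpt
  rw [av_mul, av_sub, av_const, av_mul]
  have e1 : av (fun ω : Fin n → GPt m d × GPt L d =>
      (∑ j, ∑ j', Real.exp (-l * gdistM (ω j).1 (yy hd (ω j')))) / n) =
      av (fun ω : Fin n → GPt m d × GPt L d => ∑ j, ∑ j', g (ω j) (ω j')) / n := by
    simp only [av, ← Finset.sum_div]
    rw [div_right_comm]
  rw [e1]
  have h7 : av (fun ω : Fin n → GPt m d × GPt L d => ∑ j, ∑ j', g (ω j) (ω j')) / n ≤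
      (1 + M) * (Z / (L : ℝ) ^ d) := by
    rw [div_le_iff₀ hn0]; linarith
  have h8 : Z / (L : ℝ) ^ d ≤ (11 / 20) ^ d := by
    rw [hZ, ← div_pow]
    refine pow_le_pow_left₀ (by positivity) ?_ d
    rw [hl, div_le_iff₀ hL', div_div_eq_mul_div]
    linarith
  have h9 : Real.exp t0 ≤ (16 / 15) ^ d := by
    have h10 : Real.exp t0 = (Real.exp (1 / 16)) ^ d := by
      rw [← Real.exp_nat_mul, ht0]; congr 1; ring
    rw [h10]
    refine pow_le_pow_left₀ (Real.exp_pos _).le ?_ d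
    have h11 := Real.add_one_le_exp (-(1 / 16) : ℝ)
    rw [Real.exp_neg] at h11
    have h12 := Real.exp_pos (1 / 16 : ℝ)
    have h13 := mul_le_mul_of_nonneg_right h11 h12.le
    rw [inv_mul_cancel₀ h12.ne'] at h13
    linarith
  have h14 : Real.exp t0 * ((1 + M) * (Z / (L : ℝ) ^ d)) ≤ 1 := by
    calc Real.exp t0 * ((1 + M) * (Z / (L : ℝ) ^ d))
        ≤ (16 / 15) ^ d * ((2 * (6 / 5) ^ d) * (11 / 20) ^ d) := by
          gcongr
          linarith
      _ = 2 * (88 / 125 : ℝ) ^ d := by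
          rw [show (88 / 125 : ℝ) = 16 / 15 * (6 / 5) * (11 / 20) by norm_num, mul_pow, mul_pow]
          ring
      _ ≤ 2 * (88 / 125 : ℝ) ^ 2 := by
          gcongr ?_ * ?_
          exact pow_le_pow_of_le_one (by norm_num) (by norm_num) hd2
      _ ≤ 1 := by norm_num
  have h15 := mul_le_mul_of_nonneg_left h7 (Real.exp_pos t0).le
  have e2 : (d : ℝ) * L / 640 = 1 / l * t0 := by
    rw [hl, ht0]; field_simp; norm_num
  rw [e2]
  refine mul_le_mul_of_nonneg_left ?_ (by positivity)
  linarith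

/-! ### Final assembly -/

lemma gdistM_nx {m d : ℕ} (i : Fin d) (x : GPt m d) : gdistM (nx i x) x ≤ 1 := by
  rw [gdistM, Finset.sum_eq_single i]
  · have h := (x i).2
    simp only [nx, Function.update_self, nxt]
    rcases le_or_gt ((x i : ℕ) + 1) (m - 1) with h1 | h1
    · rw [min_eq_left h1]; simp
    · have : min ((x i : ℕ) + 1) (m - 1) = x i := by omega
      rw [this]; simp
  · intro j _ hj
    simp [nx, hj]
  · simp

lemma main_bound (κ m0 d : ℕ) (hκ : 2 ^ κ ≤ m0) (hd : 2 ≤ d) (C : ℝ) (hC : 0 ≤ C)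
    (F : ProbMeas m0 d → L1Space)
    (hF : ∀ μ ν : ProbMeas m0 d,
            tcNormG m0 d (μ.1 - ν.1) ≤ ‖F μ - F ν‖ ∧
            ‖F μ - F ν‖ ≤ C * tcNormG m0 d (μ.1 - ν.1)) :
    (κ : ℝ) * (d / 640) ≤ 2 * C * KK := by
  have hd' : (0 : ℝ) < d := by exact_mod_cast (by omega : 0 < d)
  have hN : (0 : ℝ) < ((2 : ℝ) ^ κ) ^ d := by positivity
  have hKK : 0 < KK := by unfold KK; norm_num
  set M := ⌊(6 / 5 : ℝ) ^ d⌋₊ with hMdef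
  have hge1 : (1 : ℝ) ≤ (6 / 5 : ℝ) ^ d := one_le_pow₀ (by norm_num)
  have hM : 0 < M := Nat.floor_pos.2 hge1
  have hM1 : (1 : ℝ) ≤ M := by exact_mod_cast hM
  have hMle : (M : ℝ) ≤ (6 / 5) ^ d := Nat.floor_le (by positivity)
  have hMθ : (6 / 5 : ℝ) ^ d ≤ 2 * M := by
    have := Nat.lt_floor_add_one ((6 / 5 : ℝ) ^ d)
    rw [← hMdef] at this
    linarith
  let ι : GPt (2 ^ κ) d → GPt m0 d := fun u i => Fin.castLE hκ (u i)
  have hι : ∀ u v, gdistM (ι u) (ι v) = gdistM u v := fun u v => rfl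
  let Ω : Fin κ → Type := fun k =>
    Fin (M * (2 ^ (κ - (k + 1))) ^ d) → GPt (2 ^ κ) d × GPt (2 ^ (k + 1 : ℕ)) d
  let fΩ : ∀ k, Fintype (Ω k) := fun k => inferInstanceAs (Fintype
    (Fin (M * (2 ^ (κ - (k + 1))) ^ d) → GPt (2 ^ κ) d × GPt (2 ^ (k + 1 : ℕ)) d))
  let α : (Σ k, Ω k) → ℝ := fun a => ((2 : ℝ) ^ (a.1 + 1 : ℕ))⁻¹ / Fintype.card (Ω a.1)
  let v : (Σ k, Ω k) → GPt (2 ^ κ) d → ℝ := fun a => muv (pow_dvd_pow 2 a.1.2) a.2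
  have hα : ∀ a, 0 ≤ α a := fun a => by positivity
  have hv : ∀ a, ∑ x, v a x = 0 := fun a => sum_muv _ _
  have hsum : ∀ φ : (Σ k, Ω k) → ℝ, ∑ a, α a * φ a =
      ∑ k : Fin κ, ((2 : ℝ) ^ (k + 1 : ℕ))⁻¹ * av (fun ω : Ω k => φ ⟨k, ω⟩) := by
    intro φ
    rw [Fintype.sum_sigma]
    refine Finset.sum_congr rfl fun k _ => ?_
    change ∑ x : Ω k, ((2 : ℝ) ^ (k + 1 : ℕ))⁻¹ / (Fintype.card (Ω k) : ℝ) * φ ⟨k, x⟩ = _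
    rw [← Finset.mul_sum, av]
    ring
  let β : Fin d × GPt (2 ^ κ) d → ℝ := fun _ => KK / (d * ((2 : ℝ) ^ κ) ^ d)
  have hβ : ∀ e, 0 ≤ β e := fun e => by positivity
  have hS : ∀ f : GPt (2 ^ κ) d → ℝ, ∑ a, α a * |∑ x, f x * v a x| ≤
      ∑ e : Fin d × GPt (2 ^ κ) d, β e * |f (nx e.1 e.2) - f e.2| := by
    refine coarea α hα v hv β (fun e => nx e.1 e.2) (fun e => e.2) ?_
    intro S
    rw [hsum]
    have h1 := set_sobolev κ d M hd hM hMθ S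
    have e1 : ∑ e : Fin d × GPt (2 ^ κ) d, β e * |ind S (nx e.1 e.2) - ind S e.2| =
        KK / (d * ((2 : ℝ) ^ κ) ^ d) * ∑ i, PE i (ind S) := by
      simp only [β, ← Finset.mul_sum, PE, Fintype.sum_prod_type]
    rw [e1]
    exact h1
  have : Nonempty (GPt (2 ^ κ) d) := ⟨fun _ => ⟨0, by positivity⟩⟩
  have hlin := linearization C hC F hF ι α hα v hv β hβ (fun e => nx e.1 e.2) (fun e => e.2) hS
  have hup : 2 * C * ∑ e : Fin d × GPt (2 ^ κ) d, β e * gdistM (ι (nx e.1 e.2)) (ι e.2) ≤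
      2 * C * KK := by
    refine mul_le_mul_of_nonneg_left ?_ (by positivity)
    calc ∑ e : Fin d × GPt (2 ^ κ) d, β e * gdistM (ι (nx e.1 e.2)) (ι e.2)
        ≤ ∑ e : Fin d × GPt (2 ^ κ) d, KK / (d * ((2 : ℝ) ^ κ) ^ d) := by
          refine Finset.sum_le_sum fun e _ => ?_
          rw [hι]
          exact mul_le_of_le_one_right (hβ e) (gdistM_nx _ _)
      _ = KK := by
          simp only [Finset.sum_const, Finset.card_univ, Fintype.card_prod, Fintype.card_fin,
            Fintype.card_pi, Finset.prod_const, nsmul_eq_mul]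
          push_cast
          field_simp
  refine le_trans ?_ (hlin.trans hup)
  rw [hsum (fun a => tcNormG m0 d (pushM ι (v a)))]
  have hk : ∀ k : Fin κ, (d : ℝ) / 640 ≤ ((2 : ℝ) ^ (k + 1 : ℕ))⁻¹ *
      av (fun ω : Ω k => tcNormG m0 d (pushM ι (v ⟨k, ω⟩))) := by
    intro k
    have h1 := tc_lower (m := 2 ^ κ) (L := 2 ^ (k + 1 : ℕ))
      (n := M * (2 ^ (κ - (k + 1))) ^ d) (M := M)
      (by positivity) (le_self_pow₀ (by norm_num) (by omega)) hd hM hMle (pow_dvd_pow 2 k.2) ?_ ι hι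
    · have h2 : (d : ℝ) / 640 = ((2 : ℝ) ^ (k + 1 : ℕ))⁻¹ * (d * ((2 ^ (k + 1 : ℕ) : ℕ) : ℝ) / 640) := by
        push_cast
        field_simp
      rw [h2]
      refine mul_le_mul_of_nonneg_left ?_ (by positivity)
      exact h1
    · push_cast
      rw [mul_assoc, ← mul_pow, ← pow_add]
      congr 3
      have := k.2
      omega
  refine le_trans (le_of_eq ?_) (Finset.sum_le_sum fun k _ => hk k)
  simp


/-- Any embedding of `EMD({1,…,m}^d)` into `L_1` with bi-Lipschitz distortion at most `C`
satisfies `C ≥ c·d·log m` for a universal constant `c > 0`. -/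
theorem emd_grid_L1_distortion_lower_bound :
    ∃ c : ℝ, 0 < c ∧ ∀ (m d : ℕ), 2 ≤ m → 2 ≤ d → ∀ C : ℝ, 1 ≤ C →
      ∀ F : ProbMeas m d → L1Space,
        (∀ μ ν : ProbMeas m d,
            tcNormG m d (μ.1 - ν.1) ≤ ‖F μ - F ν‖ ∧
            ‖F μ - F ν‖ ≤ C * tcNormG m d (μ.1 - ν.1)) →
        c * d * Real.log m ≤ C := by
  have hKK : 0 < KK := by unfold KK; norm_num
  refine ⟨1 / (2560 * KK), by positivity, ?_⟩
  intro m d hm hd C hC F hF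
  have hκ : 2 ^ Nat.log 2 m ≤ m := Nat.pow_log_le_self 2 (by omega)
  have hκ1 : 1 ≤ Nat.log 2 m := Nat.log_pos (by norm_num) hm
  have hκ2 : m < 2 ^ (Nat.log 2 m + 1) := Nat.lt_pow_succ_log_self (by norm_num) m
  have hmain := main_bound (Nat.log 2 m) m d hκ hd C (by linarith) F hF
  generalize Nat.log 2 m = κ at *
  have hlog : Real.log m ≤ 2 * κ := by
    have h1 : (m : ℝ) ≤ 2 ^ (κ + 1) := by exact_mod_cast hκ2.le
    have h2 := Real.log_le_log (by exact_mod_cast (by omega : 0 < m)) h1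
    rw [Real.log_pow] at h2
    push_cast at h2
    have h3 := Real.log_two_lt_d9
    have h4 : (1 : ℝ) ≤ κ := by exact_mod_cast hκ1
    nlinarith
  have h5 : 1 / (2560 * KK) * d * Real.log m ≤ 1 / (2560 * KK) * d * (2 * κ) := by gcongr
  refine h5.trans ?_
  have e : 1 / (2560 * KK) * d * (2 * κ) = (κ * (d / 640)) / (2 * KK) := by
    field_simp; norm_num
  rw [e, div_le_iff₀ (by positivity)]
  linarith
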